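/- arXiv:1612.07227 — 3 statements merged into one kernel-verified Lean document; each statement's English description precedes it below -/
import Mathlib

section
/- Let G be a group generated by a finite set S and let H_1, H_2 be stable subgroups of G. Then there exists D ≥ 0 such that whenever g_1, g_2 ∈ G and the intersection g_1H_1g_1⁻¹ ∩ g_2H_2g_2⁻¹ is infinite, the D-neighborhoods (with respect to d_S) of the cosets g_1H_1 and g_2H_2 intersect. -/
open Pointwise

section BasicDefs

variable {G : Type*} [Group G]

/-- The word length of `g` with respect to the generating set `S`
(words use letters from `S ∪ S⁻¹`). -/
noncomputable def wordLength (S : Set G) (g : G) : ℕ :=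
  sInf {n : ℕ | ∃ l : List G, l.length = n ∧ (∀ x ∈ l, x ∈ S ∨ x⁻¹ ∈ S) ∧ l.prod = g}

/-- The word metric on `G` with respect to the generating set `S`. -/
noncomputable def wordDist (S : Set G) (g h : G) : ℝ :=
  (wordLength S (g⁻¹ * h) : ℝ)

/-- The closed `r`-neighborhood of a subset `A` with respect to the word metric `d_S`. -/
def nbhd (S : Set G) (r : ℝ) (A : Set G) : Set G :=
  {g : G | ∃ a ∈ A, wordDist S g a ≤ r}

/-- The distance between two subsets: the infimum of distances between their elements. -/
noncomputable def setDist (S : Set G) (A B : Set G) : ℝ :=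
  sInf {r : ℝ | ∃ a ∈ A, ∃ b ∈ B, r = wordDist S a b}

/-- The conjugate subgroup `H^g = g H g⁻¹`. -/
def conjSub (g : G) (H : Subgroup G) : Subgroup G :=
  H.map (MulAut.conj g).toMonoidHom

end BasicDefs

/-- `γ` restricted to `{0, …, n}` is a `(K, ε)`-quasigeodesic for the distance function `d`. -/
def IsQuasigeodesic {α : Type*} (d : α → α → ℝ) (K ε : ℝ) (n : ℕ) (γ : ℕ → α) : Prop :=
  ∀ i j : ℕ, i ≤ n → j ≤ n →
    (1 / K) * |(i : ℝ) - (j : ℝ)| - ε ≤ d (γ i) (γ j) ∧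
      d (γ i) (γ j) ≤ K * |(i : ℝ) - (j : ℝ)| + ε

/-- `γ` restricted to `{0, …, n}` is a geodesic for the distance function `d`. -/
def IsGeodesic {α : Type*} (d : α → α → ℝ) (n : ℕ) (γ : ℕ → α) : Prop :=
  ∀ i j : ℕ, i ≤ n → j ≤ n → d (γ i) (γ j) = |(i : ℝ) - (j : ℝ)|

/-- The path `γ` (on `{0, …, n}`) is `f`-stable: every `(K, ε)`-quasigeodesic with endpoints
on `γ` stays in the `f K ε`-neighborhood of `γ`. -/
def IsStablePath {α : Type*} (d : α → α → ℝ) (f : ℝ → ℝ → ℝ) (n : ℕ) (γ : ℕ → α) : Prop :=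
  ∀ K ε : ℝ, 1 ≤ K → 0 ≤ ε → ∀ (m : ℕ) (η : ℕ → α),
    IsQuasigeodesic d K ε m η →
    (∃ i ≤ n, η 0 = γ i) → (∃ i ≤ n, η m = γ i) →
    ∀ j ≤ m, ∃ i ≤ n, d (η j) (γ i) ≤ f K ε

/-- The Gromov product `⟨x, y⟩_w` with respect to a distance function `d`. -/
noncomputable def gromovProd {α : Type*} (d : α → α → ℝ) (w x y : α) : ℝ :=
  (d w x + d w y - d x y) / 2

/-- Gromov hyperbolicity of a distance function, via the four-point condition. -/
def IsHyperbolicDist {α : Type*} (d : α → α → ℝ) : Prop :=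
  ∃ δ : ℝ, 0 ≤ δ ∧ ∀ w x y z : α,
    min (gromovProd d w x y) (gromovProd d w y z) - δ ≤ gromovProd d w x z

section GroupDefs

variable {G : Type*} [Group G]

/-- `H` is a stable subgroup of `(G, d_S)` with stability function `f`: `H` has a finite
generating set `T` such that the inclusion `(H, d_T) → (G, d_S)` is a quasi-isometric
embedding sending every `d_T`-geodesic to an `f`-stable quasigeodesic of `(G, d_S)`. -/
def IsStableSubgroupWith (S : Set G) (H : Subgroup G) (f : ℝ → ℝ → ℝ) : Prop :=
  ∃ T : Set H, T.Finite ∧ Subgroup.closure T = ⊤ ∧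
    (∃ μ c : ℝ, 1 ≤ μ ∧ 0 ≤ c ∧ ∀ h₁ h₂ : H,
      (1 / μ) * wordDist T h₁ h₂ - c ≤ wordDist S (h₁ : G) (h₂ : G) ∧
        wordDist S (h₁ : G) (h₂ : G) ≤ μ * wordDist T h₁ h₂ + c) ∧
    ∀ (n : ℕ) (γ : ℕ → H), IsGeodesic (wordDist T) n γ →
      (∃ K ε : ℝ, 1 ≤ K ∧ 0 ≤ ε ∧
        IsQuasigeodesic (wordDist S) K ε n (fun i => (γ i : G))) ∧
      IsStablePath (wordDist S) f n (fun i => (γ i : G))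

/-- `H` is a stable subgroup of `(G, d_S)`. -/
def IsStableSubgroup (S : Set G) (H : Subgroup G) : Prop :=
  ∃ f : ℝ → ℝ → ℝ, IsStableSubgroupWith S H f

/-- The family `Q` of subgroups is hyperbolically embedded in `(G, X)`:
(Q1) geometric separation, (Q2) finite generation, (Q3) uniform quasi-isometric embedding. -/
def IsHypEmbFamily {G : Type*} [Group G] {ι : Type*} (X : Set G) (Q : ι → Subgroup G) : Prop :=
  (∀ ε : ℝ, 0 < ε → ∃ R : ℝ, ∀ (g : G) (i j : ι),
      (∃ a ∈ (Q i : Set G) ∩ nbhd X ε (g • (Q j : Set G)),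
        ∃ b ∈ (Q i : Set G) ∩ nbhd X ε (g • (Q j : Set G)), R ≤ wordDist X a b) →
      i = j ∧ g ∈ Q i) ∧
  ∃ Y : ι → Set G, (∀ i, (Y i).Finite ∧ Y i ⊆ (Q i : Set G) ∧ Subgroup.closure (Y i) = Q i) ∧
    ∃ μ c : ℝ, 1 ≤ μ ∧ 0 ≤ c ∧ ∀ i : ι, ∀ h ∈ Q i,
      (wordLength (Y i) h : ℝ) ≤ μ * (wordLength X h : ℝ) + c

/-- The subset `H` of `G` satisfies the WPD condition in `(G, X)`. -/
def WPDSet (X : Set G) (H : Set G) : Prop :=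
  ∀ ε : ℝ, 0 < ε → ∃ N : ℝ, 0 < N ∧ ∀ h₁ h₂ : G, h₁ ∈ H → h₂ ∈ H →
    N < wordDist X h₁ h₂ →
    {g : G | wordDist X h₁ (g * h₁) < ε ∧ wordDist X h₂ (g * h₂) < ε}.Finite

/-- A quasimorphism on `G`. -/
def IsQuasimorphism (q : G → ℝ) : Prop :=
  ∃ D : ℝ, 0 ≤ D ∧ ∀ x y : G, |q (x * y) - q x - q y| ≤ D

/-- A homogeneous quasimorphism on `G`. -/
def IsHomogeneousQM (q : G → ℝ) : Prop :=
  IsQuasimorphism q ∧ ∀ (x : G) (n : ℕ), q (x ^ n) = (n : ℝ) * q x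

/-- `H` is a quasiconvex subgroup of `(G, d_S)`: every geodesic with endpoints in `H`
lies in a uniformly bounded neighborhood of `H`. -/
def IsQuasiconvex (S : Set G) (H : Subgroup G) : Prop :=
  ∃ C : ℝ, 0 ≤ C ∧ ∀ (n : ℕ) (γ : ℕ → G), IsGeodesic (wordDist S) n γ →
    γ 0 ∈ H → γ n ∈ H → ∀ i ≤ n, ∃ h ∈ H, wordDist S (γ i) h ≤ C

end GroupDefs

section Aux

variable {G : Type*} [Group G]

lemma exists_word (S : Set G) (hS : Subgroup.closure S = ⊤) (g : G) :
    ∃ l : List G, l.length = wordLength S g ∧ (∀ x ∈ l, x ∈ S ∨ x⁻¹ ∈ S) ∧ l.prod = g := by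
  have hne : {n : ℕ | ∃ l : List G, l.length = n ∧ (∀ x ∈ l, x ∈ S ∨ x⁻¹ ∈ S) ∧
      l.prod = g}.Nonempty := by
    have hg : g ∈ Subgroup.closure S := by rw [hS]; trivial
    rw [← Subgroup.mem_toSubmonoid, Subgroup.closure_toSubmonoid] at hg
    obtain ⟨l, hl, hp⟩ := Submonoid.exists_list_of_mem_closure hg
    exact ⟨l.length, l, rfl, hl, hp⟩
  exact Nat.sInf_mem hne

lemma wordLength_le (S : Set G) (l : List G) (hl : ∀ x ∈ l, x ∈ S ∨ x⁻¹ ∈ S) :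
    wordLength S l.prod ≤ l.length :=
  Nat.sInf_le ⟨l, rfl, hl, rfl⟩

lemma wordLength_one' (S : Set G) : wordLength S (1 : G) = 0 := by
  have := wordLength_le S [] (by simp)
  simpa using this

lemma wordLength_mul_le (S : Set G) (hS : Subgroup.closure S = ⊤) (g h : G) :
    wordLength S (g * h) ≤ wordLength S g + wordLength S h := by
  obtain ⟨l, h1, h2, h3⟩ := exists_word S hS g
  obtain ⟨m, k1, k2, k3⟩ := exists_word S hS h
  have := wordLength_le S (l ++ m) (by
    intro x hx
    rcases List.mem_append.1 hx with hx | hx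
    · exact h2 x hx
    · exact k2 x hx)
  simpa [h1, h3, k1, k3] using this

lemma wordLength_inv_le (S : Set G) (hS : Subgroup.closure S = ⊤) (g : G) :
    wordLength S g⁻¹ ≤ wordLength S g := by
  obtain ⟨l, h1, h2, h3⟩ := exists_word S hS g
  have := wordLength_le S (l.map (fun x => x⁻¹)).reverse (by
    intro x hx
    simp only [List.mem_reverse, List.mem_map] at hx
    obtain ⟨y, hy, rfl⟩ := hx
    rcases h2 y hy with h | h
    · right; simpa using h
    · left; exact h)
  rw [← List.prod_inv_reverse, h3] at this
  simpa [h1] using this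

lemma wordDist_comm' (S : Set G) (hS : Subgroup.closure S = ⊤) (g h : G) :
    wordDist S g h = wordDist S h g := by
  have key : ∀ g : G, wordLength S g⁻¹ = wordLength S g := fun g =>
    le_antisymm (wordLength_inv_le S hS g) (by simpa using wordLength_inv_le S hS g⁻¹)
  unfold wordDist
  rw [← key (g⁻¹ * h)]
  simp

lemma wordDist_tri (S : Set G) (hS : Subgroup.closure S = ⊤) (x y z : G) :
    wordDist S x z ≤ wordDist S x y + wordDist S y z := by
  have := wordLength_mul_le S hS (x⁻¹ * y) (y⁻¹ * z)
  have e : x⁻¹ * y * (y⁻¹ * z) = x⁻¹ * z := by group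
  rw [e] at this
  unfold wordDist
  exact_mod_cast this

lemma wordDist_left (S : Set G) (a x y : G) :
    wordDist S (a * x) (a * y) = wordDist S x y := by
  unfold wordDist
  congr 2
  group

lemma wordDist_refl (S : Set G) (x : G) : wordDist S x x = 0 := by
  simp [wordDist, wordLength_one']

lemma wordDist_one (S : Set G) (x : G) : wordDist S 1 x = wordLength S x := by
  simp [wordDist]

lemma dist_le_of_step (S : Set G) (hS : Subgroup.closure S = ⊤) (M : ℝ) (n : ℕ) (η : ℕ → G)
    (h : ∀ i < n, wordDist S (η i) (η (i + 1)) ≤ M) (i t : ℕ) (hit : i + t ≤ n) :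
    wordDist S (η i) (η (i + t)) ≤ M * t := by
  induction t with
  | zero => simp [wordDist_refl]
  | succ t ih =>
    have h1 := ih (by omega)
    have h2 := h (i + t) (by omega)
    have h3 := wordDist_tri S hS (η i) (η (i + t)) (η (i + t + 1))
    rw [← add_assoc]
    push_cast
    linarith

lemma isGeodesic_of_le (S : Set G) (hS : Subgroup.closure S = ⊤) (n : ℕ) (η : ℕ → G)
    (h : ∀ i t : ℕ, i + t ≤ n → wordDist S (η i) (η (i + t)) = t) :
    IsGeodesic (wordDist S) n η := by
  intro i j hi hj
  rcases le_total i j with hij | hij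
  · obtain ⟨t, rfl⟩ := Nat.exists_eq_add_of_le hij
    rw [h i t hj, abs_sub_comm]
    push_cast
    simp
  · obtain ⟨t, rfl⟩ := Nat.exists_eq_add_of_le hij
    rw [wordDist_comm' S hS, h j t hi]
    push_cast
    simp

lemma exists_geodesic (S : Set G) (hS : Subgroup.closure S = ⊤) (g : G) :
    ∃ α : ℕ → G, α 0 = 1 ∧ α (wordLength S g) = g ∧
      IsGeodesic (wordDist S) (wordLength S g) α := by
  obtain ⟨l, h1, h2, h3⟩ := exists_word S hS g
  have hend : (l.take (wordLength S g)).prod = g := by rw [← h1, List.take_length, h3]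
  have hstep : ∀ i < wordLength S g,
      wordDist S ((l.take i).prod) ((l.take (i+1)).prod) ≤ 1 := by
    intro i hi
    have hi' : i < l.length := by omega
    have e : (l.take (i+1)).prod = (l.take i).prod * l[i] := List.prod_take_succ l i hi'
    have := wordLength_le S [l[i]] (by
      intro x hx
      rw [List.mem_singleton] at hx
      subst hx
      exact h2 _ (List.getElem_mem hi'))
    unfold wordDist
    rw [e, inv_mul_cancel_left]
    simp only [List.prod_singleton, List.length_singleton] at this
    exact_mod_cast this
  refine ⟨fun i => (l.take i).prod, by simp, hend, ?_⟩
  apply isGeodesic_of_le S hS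
  intro i t hit
  have a0 := dist_le_of_step S hS 1 _ (fun i => (l.take i).prod) hstep
  have a1 := a0 i t hit
  have a2 := a0 0 i (by omega)
  have a3 := a0 (i + t) (wordLength S g - (i + t)) (by omega)
  rw [Nat.add_sub_cancel' hit] at a3
  rw [Nat.cast_sub hit] at a3
  simp only [zero_add, List.take_zero, List.prod_nil, hend] at a1 a2 a3
  have b1 := wordDist_tri S hS 1 (l.take i).prod g
  have b2 := wordDist_tri S hS (l.take i).prod (l.take (i+t)).prod g
  rw [wordDist_one] at b1
  push_cast at a3
  linarith

lemma finite_ball (S : Set G) (hf : S.Finite) (hS : Subgroup.closure S = ⊤) (n : ℕ) :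
    {g : G | wordLength S g ≤ n}.Finite := by
  have hf' : (S ∪ S⁻¹).Finite := hf.union hf.inv
  have := hf'.to_subtype
  have h1 : {l : List (↥(S ∪ S⁻¹)) | l.length ≤ n}.Finite := List.finite_length_le _ n
  refine (h1.image (fun l => (l.map Subtype.val).prod)).subset ?_
  intro g hg
  obtain ⟨l, h1, h2, h3⟩ := exists_word S hS g
  have h2' : ∀ x ∈ l, x ∈ S ∪ S⁻¹ := fun x hx => h2 x hx
  lift l to List (↥(S ∪ S⁻¹)) using h2'
  refine ⟨l, ?_, h3⟩
  simp only [List.length_map] at h1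
  simp only [Set.mem_ofPred_eq] at hg ⊢
  omega

lemma quasi_of_le (S : Set G) (hS : Subgroup.closure S = ⊤) (K ε : ℝ) (n : ℕ) (η : ℕ → G)
    (h : ∀ i t : ℕ, i + t ≤ n → (1 / K) * t - ε ≤ wordDist S (η i) (η (i + t)) ∧
      wordDist S (η i) (η (i + t)) ≤ K * t + ε) :
    IsQuasigeodesic (wordDist S) K ε n η := by
  intro i j hi hj
  rcases le_total i j with hij | hij
  · obtain ⟨t, rfl⟩ := Nat.exists_eq_add_of_le hij
    have := h i t hj
    rw [abs_sub_comm]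
    push_cast
    simpa using this
  · obtain ⟨t, rfl⟩ := Nat.exists_eq_add_of_le hij
    have := h j t hi
    rw [wordDist_comm' S hS]
    push_cast
    simpa using this

lemma low_bound (μ c x d : ℝ) (hμ : 1 ≤ μ) (hc : 0 ≤ c)
    (hd : x ≤ (3 * μ) * (d + c)) (hx : 0 ≤ x) :
    (1 / (3 * μ + c)) * x - c ≤ d := by
  have h0 : 0 ≤ d + c := by
    by_contra hcon
    push Not at hcon
    nlinarith
  have : (1 / (3 * μ + c)) * x ≤ d + c := by
    rw [one_div, inv_mul_le_iff₀ (by linarith)]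
    nlinarith [mul_nonneg hc h0]
  linarith

/-- The concatenated path is a uniform quasigeodesic. -/
lemma core_path (S : Set G) (hS : Subgroup.closure S = ⊤) (H₂ : Subgroup G) (T : Set H₂)
    (hT : Subgroup.closure T = ⊤) (μ c : ℝ) (hμ : 1 ≤ μ) (hc : 0 ≤ c)
    (hq : ∀ h₁ h₂ : H₂,
      (1 / μ) * wordDist T h₁ h₂ - c ≤ wordDist S (h₁ : G) (h₂ : G) ∧
        wordDist S (h₁ : G) (h₂ : G) ≤ μ * wordDist T h₁ h₂ + c)
    (g k : G) (h : H₂) (hk : k * g = g * h)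
    (hmin1 : ∀ y : H₂, wordLength S g ≤ wordLength S (g * y))
    (hmink : ∀ y : H₂, wordLength S g ≤ wordLength S (k⁻¹ * (g * y)))
    (hlong : 4 * μ * wordLength S g ≤ wordLength T h) :
    ∃ (m : ℕ) (η : ℕ → G), IsQuasigeodesic (wordDist S) (3 * μ + c) c m η ∧ η 0 = 1 ∧ η m = k ∧
      ∃ j ≤ m, η j = g := by
  obtain ⟨α, α0, αL, hα⟩ := exists_geodesic S hS g
  obtain ⟨γ, γ0, γn, hγ⟩ := exists_geodesic T hT h
  set L := wordLength S g with hL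
  set n := wordLength T h with hn
  -- lower bound in `H₂`
  have hq' : ∀ s t : ℕ, s ≤ n → t ≤ n → |(s:ℝ) - t| ≤ μ * (wordDist S (γ s : G) (γ t) + c) := by
    intro s t hs ht
    have := (hq (γ s) (γ t)).1
    rw [hγ s t hs ht] at this
    have h2 : (1 / μ) * |(s:ℝ) - t| ≤ wordDist S (γ s : G) (γ t) + c := by linarith
    rwa [one_div, inv_mul_le_iff₀ (by linarith)] at h2
  let η : ℕ → G := fun i => if i ≤ L then α i else if i ≤ L + n then g * (γ (i - L) : G)
    else k * α (L + n + L - i)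
  have η1 : ∀ i ≤ L, η i = α i := fun i hi => by simp [η, hi]
  have η2 : ∀ t ≤ n, η (L + t) = g * (γ t : G) := by
    intro t ht
    rcases Nat.eq_zero_or_pos t with rfl | h0
    · simp [η, αL, γ0]
    · have h1 : ¬ (L + t ≤ L) := by omega
      simp [η, ht, show t ≠ 0 by omega]
  have η3 : ∀ t ≤ L, η (L + n + t) = k * α (L - t) := by
    intro t ht
    rcases Nat.eq_zero_or_pos t with rfl | h0
    · rw [add_zero, η2 n le_rfl, γn, Nat.sub_zero, αL, hk]
    · have h1 : ¬ (L + n + t ≤ L) := by omega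
      have h2 : ¬ (L + n + t ≤ L + n) := by omega
      have h3 : L + n + L - (L + n + t) = L - t := by omega
      simp only [η, h1, h2, if_false, h3]
  have hM : (1:ℝ) ≤ 3 * μ + c := by linarith
  have hstep : ∀ i < L + n + L, wordDist S (η i) (η (i + 1)) ≤ 3 * μ + c := by
    intro i hi
    rcases lt_or_ge i L with h1 | h1
    · rw [η1 i h1.le, η1 (i+1) h1, hα i (i+1) h1.le h1]
      push_cast
      simpa using hM
    · obtain ⟨t, rfl⟩ := Nat.exists_eq_add_of_le h1
      rcases lt_or_ge t n with h2 | h2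
      · rw [η2 t h2.le, add_assoc, η2 (t+1) h2, wordDist_left]
        have := (hq (γ t) (γ (t+1))).2
        rw [hγ t (t+1) h2.le h2] at this
        push_cast at this
        simp only [sub_add_cancel_left, abs_neg, abs_one] at this
        linarith
      · obtain ⟨s, rfl⟩ := Nat.exists_eq_add_of_le h2
        rw [← add_assoc, η3 s (by omega), add_assoc (L+n), η3 (s+1) (by omega), wordDist_left,
          hα _ _ (by omega) (by omega), Nat.cast_sub (by omega), Nat.cast_sub (by omega)]
        push_cast
        rw [show ((L:ℝ) - s - (L - (s+1))) = 1 by ring]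
        simpa using hM
  refine ⟨L + n + L, η, ?_, by rw [η1 0 (by omega), α0], by
    rw [η3 L le_rfl, Nat.sub_self, α0, mul_one], L, by omega, by rw [η1 L le_rfl, αL]⟩
  apply quasi_of_le S hS
  intro i t hit
  refine ⟨?_, ?_⟩
  swap
  · have := dist_le_of_step S hS _ _ η hstep i t hit
    linarith
  apply low_bound μ c _ _ hμ hc _ (Nat.cast_nonneg t)
  obtain ⟨j, hj⟩ : ∃ j, j = i + t := ⟨_, rfl⟩
  have ht : (t:ℝ) = j - i := by rw [hj]; push_cast; ring
  have hij : i ≤ j := by omega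
  rw [← hj, ht]
  rw [← hj] at hit
  clear hj ht
  set d := wordDist S (η i) (η j) with hd
  have d0 : 0 ≤ d := by rw [hd]; unfold wordDist; positivity
  have md : d + c ≤ μ * (d + c) := by nlinarith
  rcases le_or_gt j L with h1 | h1
  · -- first, first
    have e : d = |(i:ℝ) - j| := by rw [hd, η1 i (by omega), η1 j h1, hα i j (by omega) h1]
    have := neg_le_abs ((i:ℝ) - j)
    linarith
  obtain ⟨s, rfl⟩ := Nat.exists_eq_add_of_le h1.le
  rcases le_or_gt s n with h2 | h2
  · rw [η2 s h2] at hd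
    rcases le_or_gt i L with h3 | h3
    · -- first, second
      rw [η1 i h3] at hd
      have a1 := wordDist_tri S hS 1 (α i) (g * (γ s : G))
      have a2 : wordDist S 1 (α i) = i := by
        rw [← α0, hα 0 i (by omega) h3]; simp
      have a3 := hmin1 (γ s)
      have a3' : (L:ℝ) ≤ wordDist S 1 (g * (γ s : G)) := by
        rw [wordDist_one]; exact_mod_cast a3
      have b1 := wordDist_tri S hS g (α i) (g * (γ s : G))
      have b2 : wordDist S g (α i) = L - i := by
        conv_lhs => rw [← αL]
        rw [hα L i le_rfl h3, abs_of_nonneg]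
        have : (i:ℝ) ≤ L := by exact_mod_cast h3
        linarith
      have b3 := hq' 0 s (by omega) h2
      have b4 : wordDist S g (g * (γ s : G)) = wordDist S (γ 0 : G) (γ s) := by
        rw [γ0]
        have := wordDist_left S g 1 (γ s : G)
        rw [mul_one] at this
        rw [this]; rfl
      have b5 := neg_le_abs (((0:ℕ):ℝ) - s)
      push_cast at b5 b3 ⊢
      have b6 : (s:ℝ) ≤ μ * (2 * d + c) :=
        (by linarith : (s:ℝ) ≤ μ * (wordDist S (γ 0 : G) (γ s) + c)).trans
          (mul_le_mul_of_nonneg_left (by linarith) (by linarith))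
      nlinarith
    · -- second, second
      obtain ⟨r, rfl⟩ := Nat.exists_eq_add_of_le h3.le
      rw [η2 r (by omega), wordDist_left] at hd
      have b3 := hq' r s (by omega) h2
      rw [← hd] at b3
      have := neg_le_abs ((r:ℝ) - s)
      push_cast
      nlinarith
  · obtain ⟨s, rfl⟩ := Nat.exists_eq_add_of_le h2.le
    have hsL : s ≤ L := by omega
    have hsL' : (s:ℝ) ≤ L := by exact_mod_cast hsL
    have hs0 : (0:ℝ) ≤ s := Nat.cast_nonneg s
    rw [← add_assoc, η3 s hsL] at hd
    have c2 : wordDist S (k * α (L - s)) (k * g) = s := by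
      rw [wordDist_left]
      conv_lhs => rw [← αL]
      rw [hα _ _ (by omega) le_rfl, Nat.cast_sub hsL, abs_sub_comm]
      simp
    rcases le_or_gt i L with h3 | h3
    · -- first, third
      rw [η1 i h3] at hd
      have h3' : (i:ℝ) ≤ L := by exact_mod_cast h3
      have b2 : wordDist S g (α i) = L - i := by
        conv_lhs => rw [← αL]
        rw [hα L i le_rfl h3, abs_of_nonneg]
        linarith
      have b1 := wordDist_tri S hS g (α i) (k * g)
      have b1' := wordDist_tri S hS (α i) (k * α (L - s)) (k * g)
      have b3 := hq' 0 n (by omega) le_rfl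
      have b4 : wordDist S g (k * g) = wordDist S (γ 0 : G) (γ n) := by
        rw [γ0, γn, hk]
        have := wordDist_left S g 1 (h : G)
        rw [mul_one] at this
        rw [this]; rfl
      have b5 := neg_le_abs (((0:ℕ):ℝ) - n)
      have hi0 : (0:ℝ) ≤ i := Nat.cast_nonneg i
      push_cast at b5 b3 ⊢
      have b6 : (n:ℝ) ≤ μ * (2 * L + d + c) :=
        (by linarith : (n:ℝ) ≤ μ * (wordDist S (γ 0 : G) (γ n) + c)).trans
          (mul_le_mul_of_nonneg_left (by linarith) (by linarith))
      have b7 : (L:ℝ) ≤ μ * L := by nlinarith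
      nlinarith
    · obtain ⟨r, rfl⟩ := Nat.exists_eq_add_of_le h3.le
      rcases le_or_gt r n with h4 | h4
      · -- second, third
        rw [η2 r h4] at hd
        have a1 := wordDist_tri S hS k (k * α (L - s)) (g * (γ r : G))
        have a2 : wordDist S k (k * α (L - s)) = L - s := by
          have := wordDist_left S k 1 (α (L - s))
          rw [mul_one] at this
          rw [this, ← α0, hα 0 _ (by omega) (by omega), Nat.cast_sub hsL, abs_sub_comm,
            abs_of_nonneg]
          · simp
          · simpa using hsL'
        have a3 := hmink (γ r)
        have a3' : (L:ℝ) ≤ wordDist S k (g * (γ r : G)) := by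
          unfold wordDist; exact_mod_cast a3
        rw [wordDist_comm' S hS (k * α (L - s))] at a1
        have b1 := wordDist_tri S hS (g * (γ r : G)) (k * α (L - s)) (k * g)
        have b3 := hq' r n h4 le_rfl
        have b4 : wordDist S (g * (γ r : G)) (k * g) = wordDist S (γ r : G) (γ n) := by
          rw [γn, hk, wordDist_left]
        have b5 := neg_le_abs ((r:ℝ) - n)
        push_cast
        have b6 : (n:ℝ) - r ≤ μ * (2 * d + c) :=
          (by linarith : (n:ℝ) - r ≤ μ * (wordDist S (γ r : G) (γ n) + c)).trans
            (mul_le_mul_of_nonneg_left (by linarith) (by linarith))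
        nlinarith
      · -- third, third
        obtain ⟨q, rfl⟩ := Nat.exists_eq_add_of_le h4.le
        rw [← add_assoc, η3 q (by omega), wordDist_left, hα _ _ (by omega) (by omega),
          Nat.cast_sub (by omega), Nat.cast_sub hsL] at hd
        have := le_abs_self ((L:ℝ) - q - (L - s))
        push_cast
        linarith

lemma exists_min_pair (S : Set G) (A B : Set G) (hA : A.Nonempty) (hB : B.Nonempty) :
    ∃ a ∈ A, ∃ b ∈ B, ∀ a' ∈ A, ∀ b' ∈ B, wordLength S (a⁻¹ * b) ≤ wordLength S (a'⁻¹ * b') := by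
  obtain ⟨p, hp, hmin⟩ := exists_minimalFor_of_wellFoundedLT (fun p : G × G => p ∈ A ×ˢ B)
    (fun p => wordLength S (p.1⁻¹ * p.2)) (hA.prod hB)
  refine ⟨p.1, hp.1, p.2, hp.2, fun a' ha b' hb => ?_⟩
  by_contra hcon
  push Not at hcon
  exact absurd (hmin (j := (a', b')) ⟨ha, hb⟩ hcon.le) (by simpa using hcon)

end Aux

/-- **Infinite intersections of conjugates force close cosets.** -/
theorem close_cosets_of_infinite_conj_inter {G : Type*} [Group G] (S : Set G)
    (hSfin : S.Finite) (hSgen : Subgroup.closure S = ⊤) (H₁ H₂ : Subgroup G)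
    (h₁ : IsStableSubgroup S H₁) (h₂ : IsStableSubgroup S H₂) :
    ∃ D : ℝ, 0 ≤ D ∧ ∀ g₁ g₂ : G,
      ((conjSub g₁ H₁ : Set G) ∩ (conjSub g₂ H₂ : Set G)).Infinite →
      (nbhd S D (g₁ • (H₁ : Set G)) ∩ nbhd S D (g₂ • (H₂ : Set G))).Nonempty := by
  obtain ⟨f, T₁, -, hT₁, -, hst⟩ := h₁
  obtain ⟨-, T, hTf, hT, ⟨μ, c, hμ, hc, hq⟩, -⟩ := h₂
  refine ⟨max 0 (f (3 * μ + c) c), le_max_left _ _, fun g₁ g₂ hinf => ?_⟩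
  obtain ⟨a, ha, b, hb, hmin⟩ := exists_min_pair S (g₁ • (H₁ : Set G)) (g₂ • (H₂ : Set G))
    ⟨g₁ • 1, Set.smul_mem_smul_set H₁.one_mem⟩ ⟨g₂ • 1, Set.smul_mem_smul_set H₂.one_mem⟩
  obtain ⟨x, hx, rfl⟩ := ha
  obtain ⟨y, hy, rfl⟩ := hb
  simp only [smul_eq_mul, SetLike.mem_coe] at hx hy hmin
  set a := g₁ * x with ha
  set b := g₂ * y with hb
  -- pick a long element
  obtain ⟨N, hN⟩ := exists_nat_ge (4 * μ * wordLength S (a⁻¹ * b))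
  obtain ⟨z, ⟨hz1, hz2⟩, hzN⟩ := (hinf.sdiff ((finite_ball T hTf hT N).image
    (fun h : H₂ => b * (h : G) * b⁻¹))).nonempty
  obtain ⟨u, hu, hzu⟩ := hz1
  obtain ⟨v, hv, hzv⟩ := hz2
  simp only [MulEquiv.coe_toMonoidHom, MulAut.conj_apply, SetLike.mem_coe] at hu hv hzu hzv
  let h : H₂ := ⟨y⁻¹ * v * y, H₂.mul_mem (H₂.mul_mem (H₂.inv_mem hy) hv) hy⟩
  have hhz : b * (h : G) * b⁻¹ = z := by
    rw [← hzv, hb]; simp only [h]; group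
  have hlong : N < wordLength T h := by
    by_contra hcon
    exact hzN ⟨h, by simpa using hcon, hhz⟩
  let k : H₁ := ⟨x⁻¹ * u * x, H₁.mul_mem (H₁.mul_mem (H₁.inv_mem hx) hu) hx⟩
  have hkz : a * (k : G) * a⁻¹ = z := by
    rw [← hzu, ha]; simp only [k]; group
  have hmin' : ∀ (p : H₁) (q : H₂),
      wordLength S (a⁻¹ * b) ≤ wordLength S ((p : G)⁻¹ * (a⁻¹ * b * q)) := by
    intro p q
    have := hmin (a * p) ⟨x * p, H₁.mul_mem hx p.2, by simp [ha, mul_assoc]⟩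
      (b * q) ⟨y * q, H₂.mul_mem hy q.2, by simp [hb, mul_assoc]⟩
    simpa [mul_assoc] using this
  have hcomm : (k : G) * (a⁻¹ * b) = a⁻¹ * b * h := by
    have e1 : (k : G) = a⁻¹ * z * a := by rw [← hkz]; group
    have e2 : (h : G) = b⁻¹ * z * b := by rw [← hhz]; group
    rw [e1, e2]; group
  obtain ⟨m, η, hη, η0, ηm, j, hj, ηj⟩ := core_path S hSgen H₂ T hT μ c hμ hc hq (a⁻¹ * b) k h
    hcomm (fun q => by simpa using hmin' 1 q) (fun q => hmin' k q)
    (hN.trans (by exact_mod_cast hlong.le))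
  obtain ⟨γ, γ0, γn, hγ⟩ := exists_geodesic T₁ hT₁ k
  obtain ⟨i, -, hi⟩ := (hst _ γ hγ).2 (3 * μ + c) c (by linarith) hc m η hη
    ⟨0, by omega, by simp [η0, γ0]⟩ ⟨_, le_rfl, by simp only [ηm, γn]⟩ j hj
  rw [ηj, wordDist_comm' S hSgen] at hi
  have hfin := hmin' (γ i) 1
  have hfin' : (wordLength S (a⁻¹ * b) : ℝ) ≤ wordDist S (γ i : G) (a⁻¹ * b) := by
    unfold wordDist
    simp only [OneMemClass.coe_one, mul_one] at hfin
    exact_mod_cast hfin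
  refine ⟨a, ⟨a, ⟨x, hx, rfl⟩, ?_⟩, ⟨b, ⟨y, hy, rfl⟩, ?_⟩⟩
  · rw [wordDist_refl]; exact le_max_left _ _
  · exact (hfin'.trans hi).trans (le_max_right _ _)
end

section
/- Let G be a group generated by a finite set S and let H_1,…,H_l be stable subgroups of G. Then among all subgroups of G of the form H_{i(1)}^{g_1} ∩ ⋯ ∩ H_{i(n)}^{g_n}, where n ∈ ℕ, i(j) ∈ {1,…,l} and g_j ∈ G, there are only finitely many G-conjugacy classes. -/
open Pointwise

section WordMetric

variable {G : Type*} [Group G] {S : Set G}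

theorem wl_le {l : List G} (hl : ∀ x ∈ l, x ∈ S ∨ x⁻¹ ∈ S) : wordLength S l.prod ≤ l.length :=
  Nat.sInf_le ⟨l, rfl, hl, rfl⟩

theorem wl_exists (hS : Subgroup.closure S = ⊤) (g : G) :
    ∃ l : List G, l.length = wordLength S g ∧ (∀ x ∈ l, x ∈ S ∨ x⁻¹ ∈ S) ∧ l.prod = g := by
  have hne : {n : ℕ | ∃ l : List G, l.length = n ∧ (∀ x ∈ l, x ∈ S ∨ x⁻¹ ∈ S) ∧
      l.prod = g}.Nonempty := by
    have hg : g ∈ Subgroup.closure S := by rw [hS]; trivial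
    rw [← Subgroup.mem_toSubmonoid, Subgroup.closure_toSubmonoid] at hg
    obtain ⟨l, hl, hp⟩ := Submonoid.exists_list_of_mem_closure hg
    exact ⟨l.length, l, rfl, hl, hp⟩
  exact Nat.sInf_mem hne

theorem wl_one : wordLength S (1 : G) = 0 := by
  have := wl_le (S := S) (l := []) (by simp)
  simpa using this

theorem wl_mul (hS : Subgroup.closure S = ⊤) (g h : G) :
    wordLength S (g * h) ≤ wordLength S g + wordLength S h := by
  obtain ⟨l, hl, hl2, rfl⟩ := wl_exists hS g
  obtain ⟨k, hk, hk2, rfl⟩ := wl_exists hS h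
  rw [← hl, ← hk, ← List.prod_append, ← List.length_append]
  apply wl_le
  intro x hx
  rcases List.mem_append.1 hx with h | h
  · exact hl2 x h
  · exact hk2 x h

theorem wl_inv_le (hS : Subgroup.closure S = ⊤) (g : G) :
    wordLength S g⁻¹ ≤ wordLength S g := by
  obtain ⟨l, hl, hl2, rfl⟩ := wl_exists hS g
  rw [← hl, List.prod_inv_reverse]
  refine (wl_le ?_).trans (by simp)
  intro x hx
  simp only [List.mem_reverse, List.mem_map] at hx
  obtain ⟨y, hy, rfl⟩ := hx
  rw [inv_inv]
  exact (hl2 y hy).symm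

theorem wl_inv (hS : Subgroup.closure S = ⊤) (g : G) :
    wordLength S g⁻¹ = wordLength S g :=
  le_antisymm (wl_inv_le hS g) (by simpa using wl_inv_le hS g⁻¹)

theorem wl_ball_finite (hfin : S.Finite) (hS : Subgroup.closure S = ⊤) (n : ℕ) :
    {g : G | wordLength S g ≤ n}.Finite := by
  induction n with
  | zero =>
    refine (Set.finite_singleton (1 : G)).subset ?_
    intro g hg
    obtain ⟨l, hl, -, rfl⟩ := wl_exists hS g
    have : l.length = 0 := by rw [hl]; simpa using hg
    rw [List.length_eq_zero_iff] at this
    simp [this]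
  | succ n ih =>
    refine ((Set.finite_singleton (1 : G)).union
      (Set.Finite.image2 (fun a b => a * b) (hfin.union hfin.inv) ih)).subset ?_
    intro g hg
    obtain ⟨l, hl, hl2, rfl⟩ := wl_exists hS g
    have hg' : l.length ≤ n + 1 := by rw [hl]; exact hg
    cases l with
    | nil => left; simp
    | cons x t =>
      right
      refine ⟨x, ?_, t.prod, ?_, by simp⟩
      · exact hl2 x (by simp)
      · have h1 := wl_le (S := S) (l := t) (fun y hy => hl2 y (by simp [hy]))
        simp only [List.length_cons] at hg'
        exact h1.trans (by omega)

theorem wd_nonneg (x y : G) : 0 ≤ wordDist S x y := Nat.cast_nonneg _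

theorem wd_self (x : G) : wordDist S x x = 0 := by simp [wordDist, wl_one]

theorem wd_comm (hS : Subgroup.closure S = ⊤) (x y : G) : wordDist S x y = wordDist S y x := by
  unfold wordDist
  rw [← wl_inv hS]; simp

theorem wd_tri (hS : Subgroup.closure S = ⊤) (x y z : G) :
    wordDist S x z ≤ wordDist S x y + wordDist S y z := by
  unfold wordDist
  have := wl_mul hS (x⁻¹ * y) (y⁻¹ * z)
  rw [show x⁻¹ * y * (y⁻¹ * z) = x⁻¹ * z by group] at this
  exact_mod_cast this

theorem wd_left (g x y : G) : wordDist S (g * x) (g * y) = wordDist S x y := by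
  unfold wordDist
  congr 2; group

theorem wd_geod (hS : Subgroup.closure S = ⊤) (x y : G) :
    ∃ (n : ℕ) (γ : ℕ → G), γ 0 = x ∧ γ n = y ∧ n = wordLength S (x⁻¹ * y) ∧
      IsGeodesic (wordDist S) n γ := by
  obtain ⟨l, hl, hl2, hp⟩ := wl_exists hS (x⁻¹ * y)
  refine ⟨l.length, fun i => x * (l.take i).prod, by simp, by simp [hp], hl, ?_⟩
  have key : ∀ i j : ℕ, i ≤ j → j ≤ l.length →
      wordDist S (x * (l.take i).prod) (x * (l.take j).prod) = (j : ℝ) - i := by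
    intro i j hij hj
    rw [wd_left]
    unfold wordDist
    have e1 : (l.take i).prod⁻¹ * (l.take j).prod = ((l.take j).drop i).prod := by
      have : l.take i = (l.take j).take i := by rw [List.take_take, min_eq_left hij]
      rw [this, inv_mul_eq_iff_eq_mul, List.prod_take_mul_prod_drop]
    rw [e1]
    have u1 : wordLength S ((l.take j).drop i).prod ≤ j - i := by
      refine (wl_le ?_).trans (by simp [hj])
      intro z hz
      exact hl2 z (List.mem_of_mem_take (List.mem_of_mem_drop hz))
    have u2 : wordLength S (l.take i).prod ≤ i := by
      refine (wl_le ?_).trans (by simp)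
      intro z hz
      exact hl2 z (List.mem_of_mem_take hz)
    have u3 : wordLength S (l.drop j).prod ≤ l.length - j := by
      refine (wl_le ?_).trans (by simp)
      intro z hz
      exact hl2 z (List.mem_of_mem_drop hz)
    have e2 : l.prod = (l.take i).prod * ((l.take j).drop i).prod * (l.drop j).prod := by
      rw [← e1]; simp [List.prod_take_mul_prod_drop]
    have u4 : l.length ≤ wordLength S (l.take i).prod + wordLength S ((l.take j).drop i).prod
        + wordLength S (l.drop j).prod := by
      rw [hl, ← hp, e2]
      exact (wl_mul hS _ _).trans (Nat.add_le_add_right (wl_mul hS _ _) _)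
    have : wordLength S ((l.take j).drop i).prod = j - i := by omega
    rw [this, Nat.cast_sub hij]
  intro i j hi hj
  rcases le_total i j with h | h
  · rw [key i j h hj, abs_sub_comm, abs_of_nonneg]
    simpa using h
  · rw [wd_comm hS, key j i h hi, abs_of_nonneg]
    simpa using h

theorem qg_of_le (hS : Subgroup.closure S = ⊤) {K ε : ℝ} {n : ℕ} {γ : ℕ → G}
    (h : ∀ i j : ℕ, i ≤ j → j ≤ n → (1 / K) * ((j : ℝ) - i) - ε ≤ wordDist S (γ i) (γ j) ∧
      wordDist S (γ i) (γ j) ≤ K * ((j : ℝ) - i) + ε) :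
    IsQuasigeodesic (wordDist S) K ε n γ := by
  intro i j hi hj
  rcases le_total i j with hij | hij
  · rw [abs_sub_comm, abs_of_nonneg (by simpa using hij)]
    exact h i j hij hj
  · rw [abs_of_nonneg (by simpa using hij), wd_comm hS]
    exact h j i hij hi

theorem qg_le {K ε : ℝ} {n : ℕ} {γ : ℕ → G}
    (h : IsQuasigeodesic (wordDist S) K ε n γ) {i j : ℕ} (hij : i ≤ j) (hj : j ≤ n) :
    (1 / K) * ((j : ℝ) - i) - ε ≤ wordDist S (γ i) (γ j) ∧
      wordDist S (γ i) (γ j) ≤ K * ((j : ℝ) - i) + ε := by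
  have := h i j (hij.trans hj) hj
  rwa [abs_sub_comm, abs_of_nonneg (by simpa using hij)] at this

theorem qg_sub (hS : Subgroup.closure S = ⊤) {K ε : ℝ} {n : ℕ} {γ : ℕ → G}
    (h : IsQuasigeodesic (wordDist S) K ε n γ) {p q : ℕ} (hpq : p ≤ q) (hq : q ≤ n) :
    IsQuasigeodesic (wordDist S) K ε (q - p) (fun i => γ (p + i)) := by
  apply qg_of_le hS
  intro i j hij hj
  have := qg_le h (i := p + i) (j := p + j) (by omega) (by omega)
  simpa using this

theorem qg_rev (hS : Subgroup.closure S = ⊤) {K ε : ℝ} {n : ℕ} {γ : ℕ → G}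
    (h : IsQuasigeodesic (wordDist S) K ε n γ) :
    IsQuasigeodesic (wordDist S) K ε n (fun i => γ (n - i)) := by
  apply qg_of_le hS
  intro i j hij hj
  have := qg_le h (i := n - j) (j := n - i) (by omega) (by omega)
  rw [wd_comm hS]
  rw [Nat.cast_sub hj, Nat.cast_sub (hij.trans hj)] at this
  convert this using 3 <;> ring

theorem qg_append (hS : Subgroup.closure S = ⊤) {K ε : ℝ} (hK : 1 ≤ K) (hε : 0 ≤ ε)
    {n : ℕ} {β : ℕ → G} (hβ : IsQuasigeodesic (wordDist S) K ε n β) (x : G)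
    (hx : ∀ i ≤ n, wordDist S x (β 0) ≤ wordDist S x (β i)) :
    ∃ (m : ℕ) (ζ : ℕ → G), IsQuasigeodesic (wordDist S) (2 * K + 1) ε m ζ ∧ ζ 0 = x ∧
      ζ m = β n ∧ (∀ i ≤ n, ∃ j ≤ m, ζ j = β i) ∧
      (∀ j ≤ m, (∃ i ≤ n, ζ j = β i) ∨ wordDist S (ζ j) (β 0) ≤ wordDist S x (β 0)) := by
  obtain ⟨m, σ, h0, hm, hlen, hσ⟩ := wd_geod hS x (β 0)
  have hd : wordDist S x (β 0) = m := by unfold wordDist; rw [← hlen]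
  have hσ' : ∀ i j : ℕ, i ≤ j → j ≤ m → wordDist S (σ i) (σ j) = (j : ℝ) - i := by
    intro i j hij hj
    rw [hσ i j (hij.trans hj) hj, abs_sub_comm, abs_of_nonneg (by simpa using hij)]
  have inv_le : 1 / (2 * K + 1) ≤ 1 / K := one_div_le_one_div_of_le (by linarith) (by linarith)
  have inv_le1 : 1 / (2 * K + 1) ≤ 1 := by
    rw [div_le_one (by linarith)]; linarith
  refine ⟨m + n, fun i => if i ≤ m then σ i else β (i - m), ?_, by simp [h0], ?_, ?_, ?_⟩
  · apply qg_of_le hS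
    intro i j hij hj
    have hji : (0 : ℝ) ≤ (j : ℝ) - i := by simpa using hij
    by_cases hjm : j ≤ m
    · have him : i ≤ m := hij.trans hjm
      simp only [hjm, him, if_true]
      rw [hσ' i j hij hjm]
      constructor
      · nlinarith
      · nlinarith
    · by_cases him : i ≤ m
      · simp only [hjm, him, if_true, if_false]
        have hj0 : j - m ≤ n := by omega
        have a1 := qg_le hβ (Nat.zero_le (j - m)) hj0
        have a2 := hx (j - m) hj0
        have a3 := wd_tri hS x (σ i) (β (j - m))
        have a4 : wordDist S x (σ i) = i := by
          rw [← h0, hσ' 0 i (Nat.zero_le _) him]; simp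
        have a5 : wordDist S (σ i) (β 0) = (m : ℝ) - i := by
          rw [← hm, hσ' i m him le_rfl]
        have a6 := wd_tri hS (β 0) (σ i) (β (j - m))
        have a7 := wd_tri hS (σ i) (β 0) (β (j - m))
        rw [wd_comm hS (β 0) (σ i)] at a6
        rw [Nat.cast_sub (by omega)] at a1
        simp only [Nat.cast_zero, sub_zero] at a1
        have hmi : (0 : ℝ) ≤ (m : ℝ) - i := by simpa using him
        have hjm' : (0 : ℝ) ≤ (j : ℝ) - m := by
          have : m ≤ j := by omega
          simpa using this
        set d := wordDist S (σ i) (β (j - m))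
        constructor
        · have b1 : (1 / K) * ((j : ℝ) - m) ≤ 2 * d + ε := by linarith
          have b2 : ((j : ℝ) - m) ≤ K * (2 * d + ε) := by
            rw [one_div, inv_mul_le_iff₀ (by linarith)] at b1
            exact b1
          rw [sub_le_iff_le_add, one_div, inv_mul_le_iff₀ (by linarith)]
          nlinarith
        · nlinarith
      · simp only [hjm, him, if_false]
        have a1 := qg_le hβ (i := i - m) (j := j - m) (by omega) (by omega)
        rw [Nat.cast_sub (by omega), Nat.cast_sub (by omega)] at a1
        rw [show (j : ℝ) - m - (i - m) = j - i by ring] at a1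
        constructor
        · nlinarith
        · nlinarith
  · by_cases hn : n = 0
    · simp [hn, hm]
    · simp [hn]
  · intro i hi
    refine ⟨m + i, by omega, ?_⟩
    by_cases hn : i = 0
    · simp [hn, hm]
    · simp [hn]
  · intro j hj
    by_cases hjm : j ≤ m
    · right
      simp only [hjm, if_true]
      rw [hd, ← hm, hσ' j m hjm le_rfl]
      simp
    · left
      exact ⟨j - m, by omega, by simp [hjm]⟩

end WordMetric

section Stable

variable {G : Type*} [Group G]

/-- The data of a stable subgroup. -/
def StabData (S : Set G) (H : Subgroup G) (f : ℝ → ℝ → ℝ) (T : Set H) (μ c : ℝ) : Prop :=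
  T.Finite ∧ Subgroup.closure T = ⊤ ∧ 1 ≤ μ ∧ 0 ≤ c ∧ (∀ h₁ h₂ : H,
      (1 / μ) * wordDist T h₁ h₂ - c ≤ wordDist S (h₁ : G) (h₂ : G) ∧
        wordDist S (h₁ : G) (h₂ : G) ≤ μ * wordDist T h₁ h₂ + c) ∧
    ∀ (n : ℕ) (γ : ℕ → H), IsGeodesic (wordDist T) n γ →
      IsStablePath (wordDist S) f n (fun i => (γ i : G))

theorem StabData.qg {S : Set G} {H : Subgroup G} {f : ℝ → ℝ → ℝ} {T : Set H} {μ c : ℝ}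
    (h : StabData S H f T μ c) {n : ℕ} {γ : ℕ → H} (hγ : IsGeodesic (wordDist T) n γ) :
    IsQuasigeodesic (wordDist S) μ c n (fun i => (γ i : G)) := by
  obtain ⟨-, -, -, -, hqi, -⟩ := h
  intro i j hi hj
  rw [← hγ i j hi hj]
  exact hqi _ _

theorem exists_nearest (φ : ℕ → ℝ) (n : ℕ) : ∃ p ≤ n, ∀ i ≤ n, φ p ≤ φ i := by
  obtain ⟨p, hp, h⟩ := Finset.exists_min_image (Finset.range (n + 1)) φ ⟨0, by simp⟩
  exact ⟨p, by simpa [Nat.lt_succ_iff] using hp, fun i hi => h i (by simpa [Nat.lt_succ_iff] using hi)⟩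

/-- Half of the thin triangle property. -/
theorem StabData.half {S : Set G} (hS : Subgroup.closure S = ⊤)
    {H : Subgroup G} {f : ℝ → ℝ → ℝ} {T : Set H} {μ c : ℝ}
    (h : StabData S H f T μ c) {n : ℕ} {β : ℕ → H}
    (hβ : IsQuasigeodesic (wordDist S) μ c n (fun i => (β i : G))) (x : H)
    {p : ℕ} (hp : p ≤ n)
    (hpm : ∀ i ≤ n, wordDist S (x : G) (β p : G) ≤ wordDist S (x : G) (β i : G))
    {i : ℕ} (hpi : p ≤ i) (hi : i ≤ n) :
    ∃ w : H, wordDist T x w + wordDist T w (β n) = wordDist T x (β n) ∧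
      wordDist S (β i : G) (w : G) ≤ f (2 * μ + 1) c := by
  obtain ⟨hTf, hT, hμ, hc, hqi, hst⟩ := h
  have h1 := qg_sub hS hβ hp le_rfl
  obtain ⟨m, ζ, hζ, hζ0, hζm, hζi, -⟩ := qg_append hS hμ hc h1 (x : G)
    (fun j hj => hpm (p + j) (by omega))
  obtain ⟨k, α, hα0, hαk, hk, hα⟩ := wd_geod hT x (β n)
  obtain ⟨j, hj, hje⟩ := hζi (i - p) (by omega)
  obtain ⟨s, hs, hsd⟩ := hst k α hα (2 * μ + 1) c (by linarith) hc m ζ hζ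
    ⟨0, Nat.zero_le _, by simp [hζ0, hα0]⟩
    ⟨k, le_rfl, by simp [hζm, hαk, hp]⟩ j hj
  refine ⟨α s, ?_, ?_⟩
  · have e1 := hα 0 s (Nat.zero_le _) hs
    have e2 := hα s k hs le_rfl
    have e3 := hα 0 k (Nat.zero_le _) le_rfl
    rw [hα0] at e1 e3
    rw [hαk] at e2 e3
    have : (s : ℝ) ≤ k := by exact_mod_cast hs
    rw [e1, e2, e3, abs_sub_comm (s : ℝ), abs_of_nonneg (sub_nonneg.2 this)]
    simp
  · rw [hje] at hsd
    rw [show β i = β (p + (i - p)) by congr 1; omega]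
    exact hsd

theorem StabData.thin {S : Set G} (hS : Subgroup.closure S = ⊤)
    {H : Subgroup G} {f : ℝ → ℝ → ℝ} {T : Set H} {μ c : ℝ}
    (h : StabData S H f T μ c) {n : ℕ} {β : ℕ → H}
    (hβ : IsGeodesic (wordDist T) n β) (x : H) {i : ℕ} (hi : i ≤ n) :
    ∃ w : H, (wordDist T x w + wordDist T w (β n) = wordDist T x (β n) ∨
      wordDist T x w + wordDist T w (β 0) = wordDist T x (β 0)) ∧
      wordDist T (β i) w ≤ μ * (f (2 * μ + 1) c + c) := by
  have hqg := h.qg hβ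
  obtain ⟨p, hp, hpm⟩ := exists_nearest (fun i => wordDist S (x : G) (β i : G)) n
  have key : ∃ w : H, (wordDist T x w + wordDist T w (β n) = wordDist T x (β n) ∨
      wordDist T x w + wordDist T w (β 0) = wordDist T x (β 0)) ∧
      wordDist S (β i : G) (w : G) ≤ f (2 * μ + 1) c := by
    rcases le_total p i with hpi | hpi
    · obtain ⟨w, hw, hw2⟩ := h.half hS hqg x hp hpm hpi hi
      exact ⟨w, Or.inl hw, hw2⟩
    · obtain ⟨w, hw, hw2⟩ := h.half hS (β := fun i => β (n - i)) (qg_rev hS hqg) x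
        (p := n - p) (i := n - i) (by omega)
        (fun j hj => by
          have := hpm (n - j) (by omega)
          rw [show n - (n - p) = p by omega]; exact this) (by omega) (by omega)
      refine ⟨w, Or.inr (by simpa using hw), ?_⟩
      rwa [show n - (n - i) = i by omega] at hw2
  obtain ⟨w, hw, hw2⟩ := key
  refine ⟨w, hw, ?_⟩
  obtain ⟨-, -, hμ, -, hqi, -⟩ := h
  have := (hqi (β i) w).1
  have h3 : (1 / μ) * wordDist T (β i) w ≤ f (2 * μ + 1) c + c := by linarith
  rwa [one_div, inv_mul_le_iff₀ (by linarith)] at h3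

/-- Finite subgroups have an almost fixed point. -/
theorem StabData.center {S : Set G} (hS : Subgroup.closure S = ⊤)
    {H : Subgroup G} {f : ℝ → ℝ → ℝ} {T : Set H} {μ c : ℝ}
    (h : StabData S H f T μ c) (A : Subgroup H) (hA : (A : Set H).Finite) :
    ∃ x : H, ∀ a ∈ A, wordDist T x (a * x) ≤ 4 * (μ * (f (2 * μ + 1) c + c)) + 1 := by
  have hT := h.2.1
  set δ := μ * (f (2 * μ + 1) c + c) with hδ
  -- radius
  let P : ℕ → Prop := fun r => ∃ x : H, ∀ a ∈ A, wordLength T (x⁻¹ * a) ≤ r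
  have hP : ∃ r, P r := by
    obtain ⟨b, hb⟩ := (hA.image (fun a => wordLength T ((1 : H)⁻¹ * a))).bddAbove
    exact ⟨b, 1, fun a ha => hb ⟨a, ha, rfl⟩⟩
  classical
  obtain ⟨x, hx⟩ := Nat.find_spec hP
  set r := Nat.find hP with hr
  have hfar : ∀ m : H, ∃ y ∈ A, (r : ℝ) ≤ wordDist T y m := by
    intro m
    by_contra hcon
    push Not at hcon
    have h1 : ∀ a ∈ A, wordLength T (m⁻¹ * a) < r := by
      intro a ha
      have := hcon a ha
      rw [wd_comm hT] at this
      unfold wordDist at this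
      exact_mod_cast this
    have h0 : 0 < r := by
      have := h1 1 A.one_mem
      omega
    exact Nat.find_min hP (m := r - 1) (by omega) ⟨m, fun a ha => by have := h1 a ha; omega⟩
  have hxd : ∀ y ∈ A, wordDist T y x ≤ r := by
    intro y hy
    rw [wd_comm hT]
    unfold wordDist
    exact_mod_cast hx y hy
  refine ⟨x, fun a ha => ?_⟩
  have hxd' : ∀ y ∈ A, wordDist T y (a * x) ≤ r := by
    intro y hy
    have := hxd (a⁻¹ * y) (A.mul_mem (A.inv_mem ha) hy)
    rw [← wd_left a] at this
    simpa using this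
  obtain ⟨n, β, h0, hn, hlen, hβ⟩ := wd_geod hT x (a * x)
  have hmid : n / 2 ≤ n := Nat.div_le_self _ _
  obtain ⟨y, hy, hyr⟩ := hfar (β (n / 2))
  obtain ⟨w, hw, hw2⟩ := h.thin hS hβ y hmid
  rw [← hδ] at hw2
  have t1 := wd_tri hT y w (β (n / 2))
  have e1 := hβ 0 (n / 2) (Nat.zero_le _) hmid
  have e2 := hβ (n / 2) n hmid le_rfl
  have e3 : wordDist T x (a * x) = n := by unfold wordDist; rw [← hlen]
  have hle : ((n / 2 : ℕ) : ℝ) ≤ n := by exact_mod_cast hmid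
  have hh1 : (n : ℝ) ≤ 2 * ((n / 2 : ℕ) : ℝ) + 1 := by
    have : n ≤ 2 * (n / 2) + 1 := by omega
    exact_mod_cast this
  have hh2 : 2 * ((n / 2 : ℕ) : ℝ) ≤ n := by
    have : 2 * (n / 2) ≤ n := by omega
    exact_mod_cast this
  rw [abs_sub_comm, abs_of_nonneg (by simp)] at e1
  rw [abs_sub_comm, abs_of_nonneg (by linarith)] at e2
  simp only [Nat.cast_zero, sub_zero] at e1
  have hwc := wd_comm hT w (β (n / 2))
  have c1 := hxd y hy
  have c2 := hxd' y hy
  rw [e3]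
  rcases hw with hw | hw
  · have t2 := wd_tri hT (β (n / 2)) w (β n)
    rw [hn] at hw t2 e2
    linarith
  · have t2 := wd_tri hT (β (n / 2)) w (β 0)
    have t3 := wd_comm hT (β (n / 2)) (β 0)
    rw [h0] at hw t2 e1 t3
    linarith

/-- The middle of a long geodesic is close to the other coset. -/
theorem StabData.middle {S : Set G} (hS : Subgroup.closure S = ⊤)
    {H₁ H₂ : Subgroup G} {f₁ f₂ : ℝ → ℝ → ℝ} {T₁ : Set H₁} {T₂ : Set H₂} {μ₁ c₁ μ₂ c₂ : ℝ}
    (h1 : StabData S H₁ f₁ T₁ μ₁ c₁) (h2 : StabData S H₂ f₂ T₂ μ₂ c₂) (g : G) :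
    ∃ N : ℕ, ∀ (a : H₁) (b : H₂), g * a = b * g → ∀ (n : ℕ) (β : ℕ → H₁),
      IsGeodesic (wordDist T₁) n β → β 0 = 1 → β n = a → N ≤ n →
      ∃ w : H₂, wordDist S (g * (β (n / 2) : G)) (w : G) ≤ f₂ (2 * (2 * μ₁ + 1) + 1) c₁ := by
  have hμ := h1.2.2.1
  have hc := h1.2.2.2.1
  set D := wordDist S 1 g with hD
  have hD0 : 0 ≤ D := wd_nonneg _ _
  obtain ⟨N, hN⟩ := exists_nat_gt (4 * (μ₁ * (2 * D + c₁)) + 2 * (μ₁ * (3 * D + c₁)) + 4)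
  refine ⟨N, ?_⟩
  intro a b hab n β hβ hβ0 hβn hNn
  have hn : 4 * (μ₁ * (2 * D + c₁)) + 2 * (μ₁ * (3 * D + c₁)) + 4 < n :=
    hN.trans_le (by exact_mod_cast hNn)
  have hpos2 : 0 ≤ μ₁ * (2 * D + c₁) := by positivity
  have hpos3 : 0 ≤ μ₁ * (3 * D + c₁) := by positivity
  let η : ℕ → G := fun i => g * (β i : G)
  have hη : IsQuasigeodesic (wordDist S) μ₁ c₁ n η := by
    intro i j hi hj
    have := h1.qg hβ i j hi hj
    simpa only [η, wd_left] using this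
  have hη0 : η 0 = g := by simp [η, hβ0]
  have hηn : η n = b * g := by simp [η, hβn, hab]
  have dn : wordDist S (b : G) (η n) = D := by
    rw [hηn, hD, ← wd_left (b : G) 1 g]; simp
  have lower : ∀ i j : ℕ, i ≤ j → j ≤ n →
      (j : ℝ) - i ≤ μ₁ * (wordDist S (η i) (η j) + c₁) := by
    intro i j hij hj
    have := (qg_le hη hij hj).1
    have h3 : (1 / μ₁) * ((j : ℝ) - i) ≤ wordDist S (η i) (η j) + c₁ := by linarith
    rwa [one_div, inv_mul_le_iff₀ (by linarith)] at h3
  obtain ⟨p, hp, hpm⟩ := exists_nearest (fun i => wordDist S 1 (η i)) n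
  obtain ⟨q, hq, hqm⟩ := exists_nearest (fun i => wordDist S (b : G) (η i)) n
  have dp : wordDist S 1 (η p) ≤ D := by
    have := hpm 0 (Nat.zero_le _)
    simp only [hη0] at this
    exact this
  have dq : wordDist S (b : G) (η q) ≤ D := by
    have := hqm n le_rfl
    simp only [dn] at this
    exact this
  have p_le : (p : ℝ) ≤ μ₁ * (2 * D + c₁) := by
    have l1 := lower 0 p (Nat.zero_le _) hp
    have t1 := wd_tri hS (η 0) 1 (η p)
    rw [hη0, wd_comm hS g 1] at t1
    rw [hη0] at l1
    simp only [Nat.cast_zero, sub_zero] at l1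
    refine l1.trans ?_
    apply mul_le_mul_of_nonneg_left _ (by linarith)
    linarith
  have q_le : (n : ℝ) - q ≤ μ₁ * (2 * D + c₁) := by
    have l1 := lower q n hq le_rfl
    have t1 := wd_tri hS (η q) (b : G) (η n)
    rw [wd_comm hS (η q) (b : G), dn] at t1
    refine l1.trans ?_
    apply mul_le_mul_of_nonneg_left _ (by linarith)
    linarith
  have hh1 : (n : ℝ) ≤ 2 * ((n / 2 : ℕ) : ℝ) + 1 := by
    have : n ≤ 2 * (n / 2) + 1 := by omega
    exact_mod_cast this
  have hh2 : 2 * ((n / 2 : ℕ) : ℝ) ≤ n := by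
    have : 2 * (n / 2) ≤ n := by omega
    exact_mod_cast this
  have p_mid : p ≤ n / 2 := by
    have : (p : ℝ) ≤ ((n / 2 : ℕ) : ℝ) := by linarith
    exact_mod_cast this
  have mid_q : n / 2 ≤ q := by
    have : ((n / 2 : ℕ) : ℝ) ≤ q := by linarith
    exact_mod_cast this
  have hpq : p ≤ q := p_mid.trans mid_q
  have dpq : 3 * D ≤ wordDist S (η p) (η q) := by
    have l1 := lower p q hpq hq
    have l2 : μ₁ * (3 * D + c₁) ≤ μ₁ * (wordDist S (η p) (η q) + c₁) := by linarith
    have := le_of_mul_le_mul_left l2 (by linarith)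
    linarith
  obtain ⟨m, ζ, hζ, hζ0, hζm, hζi, hζj⟩ := qg_append hS hμ hc (qg_sub hS hη hpq hq) 1
    (fun j hj => hpm (p + j) (by omega))
  rw [show p + (q - p) = q by omega] at hζm
  simp only [add_zero] at hζj
  obtain ⟨m', θ, hθ, hθ0, hθm, hθi, -⟩ := qg_append hS (by linarith) hc (qg_rev hS hζ) (b : G) (by
    intro i hi
    simp only [Nat.sub_zero, hζm]
    rcases hζj (m - i) (by omega) with ⟨k, hk, hke⟩ | hk
    · rw [hke]
      exact hqm (p + k) (by omega)
    · have t1 := wd_tri hS (η p) (ζ (m - i)) (η q)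
      have t2 := wd_tri hS (ζ (m - i)) (b : G) (η q)
      rw [wd_comm hS (η p) (ζ (m - i))] at t1
      rw [wd_comm hS (ζ (m - i)) (b : G)] at t2
      linarith)
  simp only [Nat.sub_self, hζ0] at hθm
  obtain ⟨j, hj, hje⟩ := hζi (n / 2 - p) (by omega)
  rw [show p + (n / 2 - p) = n / 2 by omega] at hje
  obtain ⟨j', hj', hje'⟩ := hθi (m - j) (by omega)
  simp only [show m - (m - j) = j by omega, hje] at hje'
  obtain ⟨k, α, hα0, hαk, hk, hα⟩ := wd_geod h2.2.1 1 b
  obtain ⟨s, hs, hsd⟩ := h2.2.2.2.2.2 k α hα (2 * (2 * μ₁ + 1) + 1) c₁ (by linarith) hc m' θ hθ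
    ⟨k, le_rfl, by simp [hθ0, hαk]⟩
    ⟨0, Nat.zero_le _, by simp [hθm, hα0]⟩ j' hj'
  rw [hje'] at hsd
  exact ⟨α s, hsd⟩

end Stable

section Conj

variable {G : Type*} [Group G]

theorem mem_conjSub {g y : G} {H : Subgroup G} : y ∈ conjSub g H ↔ g⁻¹ * y * g ∈ H := by
  unfold conjSub
  rw [Subgroup.mem_map]
  constructor
  · rintro ⟨x, hx, rfl⟩
    simpa [mul_assoc] using hx
  · intro h
    exact ⟨_, h, by simp [mul_assoc]⟩

end Conj

/-- **Finitely many conjugacy classes of intersections of conjugates.** -/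
theorem finitely_many_conj_classes_of_intersections {G : Type*} [Group G] (S : Set G)
    (hSfin : S.Finite) (hSgen : Subgroup.closure S = ⊤) (l : ℕ) (H : Fin l → Subgroup G)
    (hstable : ∀ i, IsStableSubgroup S (H i)) :
    ∃ F : Finset (Subgroup G), ∀ (n : ℕ) (idx : Fin n → Fin l) (g : Fin n → G),
      ∃ K ∈ F, ∃ t : G, (⨅ j : Fin n, conjSub (g j) (H (idx j))) = conjSub t K := by
  choose f T hTf hTg hqi hst using hstable
  choose μ c hμ hc hqi using hqi
  have hd : ∀ i, StabData S (H i) (f i) (T i) (μ i) (c i) := fun i =>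
    ⟨hTf i, hTg i, hμ i, hc i, hqi i, fun n γ hγ => (hst i n γ hγ).2⟩
  -- the finite intersections
  let ρ : Fin l → ℕ := fun i => ⌈4 * (μ i * (f i (2 * μ i + 1) (c i) + c i)) + 1⌉₊
  let E : Set G := ⋃ i, (fun h : H i => (h : G)) '' {h : H i | wordLength (T i) h ≤ ρ i}
  have hE : E.Finite := Set.finite_iUnion fun i => (wl_ball_finite (hTf i) (hTg i) _).image _
  have hF1 : {K : Subgroup G | (K : Set G) ⊆ E}.Finite :=
    Set.Finite.preimage (SetLike.coe_injective.injOn) hE.finite_subsets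
  -- the infinite intersections
  let R : Fin l → Fin l → ℕ := fun i j => ⌈f j (2 * (2 * μ i + 1) + 1) (c i)⌉₊
  let B : Set G := ⋃ i, ⋃ j, {g : G | wordLength S g ≤ R i j}
  have hB : B.Finite := Set.finite_iUnion fun i => Set.finite_iUnion fun j =>
    wl_ball_finite hSfin hSgen _
  have hF2 : ((fun J : Set (Fin l × G) => ⨅ p ∈ J, conjSub p.2 (H p.1)) ''
      {J | J ⊆ Set.univ ×ˢ B}).Finite :=
    ((Set.finite_univ.prod hB).finite_subsets).image _
  refine ⟨(hF1.union hF2).toFinset, ?_⟩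
  intro n idx g
  simp only [Set.Finite.mem_toFinset]
  set A : Subgroup G := ⨅ j : Fin n, conjSub (g j) (H (idx j)) with hA
  rcases Nat.eq_zero_or_pos n with hn | hn
  · subst hn
    refine ⟨⊤, Or.inr ⟨∅, by simp, by simp⟩, 1, ?_⟩
    ext y
    simp [hA, mem_conjSub]
  let j0 : Fin n := ⟨0, hn⟩
  have hmem : ∀ y ∈ A, ∀ j, (g j)⁻¹ * y * g j ∈ H (idx j) := by
    intro y hy j
    rw [hA, Subgroup.mem_iInf] at hy
    exact mem_conjSub.1 (hy j)
  by_cases hfin : (A : Set G).Finite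
  · let A' : Subgroup (H (idx j0)) := (conjSub (g j0)⁻¹ A).subgroupOf (H (idx j0))
    have hA' : (A' : Set (H (idx j0))).Finite := by
      have : (conjSub (g j0)⁻¹ A : Set G).Finite := hfin.image _
      exact Set.Finite.preimage (f := fun h : H (idx j0) => (h : G))
        Subtype.val_injective.injOn this
    obtain ⟨x, hx⟩ := (hd (idx j0)).center hSgen A' hA'
    refine ⟨conjSub ((x : G)⁻¹ * (g j0)⁻¹) A, Or.inl ?_, g j0 * x, ?_⟩
    · intro y hy
      have hy' := mem_conjSub.1 hy
      have ha := hmem _ hy' j0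
      have hx' := hx ⟨_, ha⟩ (by
        rw [Subgroup.mem_subgroupOf, mem_conjSub]
        convert hy' using 1
        simp [mul_assoc])
      refine Set.mem_iUnion.2 ⟨idx j0, x⁻¹ * (⟨_, ha⟩ * x), ?_, ?_⟩
      · have := hx'.trans (Nat.le_ceil _)
        unfold wordDist at this
        exact_mod_cast this
      · simp [mul_assoc]
    · ext y
      rw [mem_conjSub, mem_conjSub]
      simp [mul_assoc]
  · have hN := fun j => (hd (idx j0)).middle hSgen (hd (idx j)) ((g j)⁻¹ * g j0)
    choose N hN using hN
    obtain ⟨M, hM⟩ := (Set.finite_range N).bddAbove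
    have hbig : ∃ a ∈ A, ∃ ha : (g j0)⁻¹ * a * g j0 ∈ H (idx j0),
        M ≤ wordLength (T (idx j0)) (⟨_, ha⟩ : H (idx j0)) := by
      by_contra hcon
      push Not at hcon
      apply hfin
      refine ((wl_ball_finite (hTf (idx j0)) (hTg (idx j0)) M).image
        (fun h : H (idx j0) => g j0 * (h : G) * (g j0)⁻¹)).subset ?_
      intro a ha
      refine ⟨⟨_, hmem a ha j0⟩, (hcon a ha (hmem a ha j0)).le, ?_⟩
      simp [mul_assoc]
    obtain ⟨a, haA, ha, haM⟩ := hbig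
    obtain ⟨k, β, hβ0, hβk, hk, hβ⟩ := wd_geod (hTg (idx j0)) 1 (⟨_, ha⟩ : H (idx j0))
    have hkM : M ≤ k := by rw [hk]; simpa using haM
    have hw := fun j => hN j ⟨_, ha⟩ ⟨_, hmem a haA j⟩ (by simp [mul_assoc]) k β hβ hβ0 hβk
      ((hM ⟨j, rfl⟩).trans hkM)
    choose w hw using hw
    set x : G := g j0 * (β (k / 2) : G) with hx
    refine ⟨⨅ p ∈ Set.range (fun j => (idx j, x⁻¹ * (g j * (w j : G)))), conjSub p.2 (H p.1),
      Or.inr ⟨_, ?_, rfl⟩, x, ?_⟩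
    · rintro _ ⟨j, rfl⟩
      refine ⟨trivial, Set.mem_iUnion.2 ⟨idx j0, Set.mem_iUnion.2 ⟨idx j, ?_⟩⟩⟩
      have := (hw j).trans (Nat.le_ceil _)
      rw [← wd_left (g j)] at this
      unfold wordDist at this
      rw [show g j * ((g j)⁻¹ * g j0 * (β (k / 2) : G)) = x by simp [hx, mul_assoc]] at this
      exact_mod_cast this
    · ext y
      rw [hA, mem_conjSub]
      simp only [Subgroup.mem_iInf, Set.forall_mem_range, mem_conjSub]
      refine forall_congr' fun j => ?_
      have e : (x⁻¹ * (g j * (w j : G)))⁻¹ * (x⁻¹ * y * x) * (x⁻¹ * (g j * (w j : G)))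
          = (w j : G)⁻¹ * ((g j)⁻¹ * y * g j) * (w j : G) := by group
      rw [e, Subgroup.mul_mem_cancel_right _ (w j).2,
        Subgroup.mul_mem_cancel_left _ ((H (idx j)).inv_mem (w j).2)]
end

section
/- Let G be a group generated by a finite set S and let 𝓗 = {H_1,…,H_l} be a finite collection of stable subgroups of G. For each D ≥ 0 there exists R ≥ 0 such that: if 𝒞 is any collection of left cosets of subgroups in 𝓗 with the property that any two cosets in 𝒞 are at d_S-distance at most D from each other, then there exists x ∈ G such that the closed ball of radius R around x meets every coset in 𝒞. -/
open Pointwise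

namespace CoarseCenters

/-- A discrete geodesic (pseudo)metric with natural-number values. -/
structure PM {α : Type*} (d : α → α → ℝ) : Prop where
  self : ∀ x, d x x = 0
  symm : ∀ x y, d x y = d y x
  tri : ∀ x y z, d x z ≤ d x y + d y z
  nat : ∀ x y, ∃ n : ℕ, d x y = n
  geod : ∀ x y, ∃ (n : ℕ) (γ : ℕ → α), IsGeodesic d n γ ∧ γ 0 = x ∧ γ n = y

section Word

variable {G : Type*} [Group G]

lemma wl_exists {S : Set G} (hS : Subgroup.closure S = ⊤) (g : G) :
    ∃ l : List G, l.length = wordLength S g ∧ (∀ x ∈ l, x ∈ S ∨ x⁻¹ ∈ S) ∧ l.prod = g := by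
  have hne : {n : ℕ | ∃ l : List G, l.length = n ∧ (∀ x ∈ l, x ∈ S ∨ x⁻¹ ∈ S) ∧
      l.prod = g}.Nonempty := by
    have hg : g ∈ Subgroup.closure S := by rw [hS]; trivial
    rw [← Subgroup.mem_toSubmonoid, Subgroup.closure_toSubmonoid] at hg
    obtain ⟨l, hl, hp⟩ := Submonoid.exists_list_of_mem_closure hg
    exact ⟨l.length, l, rfl, hl, hp⟩
  exact Nat.sInf_mem hne

lemma wl_le {S : Set G} (l : List G) (hl : ∀ x ∈ l, x ∈ S ∨ x⁻¹ ∈ S) :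
    wordLength S l.prod ≤ l.length :=
  Nat.sInf_le ⟨l, rfl, hl, rfl⟩

lemma wl_one (S : Set G) : wordLength S (1 : G) = 0 := by
  have := wl_le (S := S) [] (by simp)
  simpa using this

lemma wl_mul {S : Set G} (hS : Subgroup.closure S = ⊤) (g h : G) :
    wordLength S (g * h) ≤ wordLength S g + wordLength S h := by
  obtain ⟨l, h1, h2, h3⟩ := wl_exists hS g
  obtain ⟨l', h1', h2', h3'⟩ := wl_exists hS h
  have := wl_le (S := S) (l ++ l') (by
    intro x hx
    rcases List.mem_append.1 hx with hx | hx
    · exact h2 x hx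
    · exact h2' x hx)
  rw [List.prod_append, h3, h3', List.length_append, h1, h1'] at this
  exact this

lemma wl_inv_le {S : Set G} (hS : Subgroup.closure S = ⊤) (g : G) :
    wordLength S g⁻¹ ≤ wordLength S g := by
  obtain ⟨l, h1, h2, h3⟩ := wl_exists hS g
  have := wl_le (S := S) (l.map (fun x => x⁻¹)).reverse (by
    intro x hx
    rw [List.mem_reverse, List.mem_map] at hx
    obtain ⟨y, hy, rfl⟩ := hx
    rw [inv_inv]
    exact (h2 y hy).symm)
  rw [← List.prod_inv_reverse, h3] at this
  simpa [h1] using this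

lemma wl_inv {S : Set G} (hS : Subgroup.closure S = ⊤) (g : G) :
    wordLength S g⁻¹ = wordLength S g :=
  le_antisymm (wl_inv_le hS g) (by simpa using wl_inv_le hS g⁻¹)

lemma wd_left (S : Set G) (g x y : G) : wordDist S (g * x) (g * y) = wordDist S x y := by
  unfold wordDist
  congr 2
  group

lemma wd_symm {S : Set G} (hS : Subgroup.closure S = ⊤) (x y : G) :
    wordDist S x y = wordDist S y x := by
  unfold wordDist
  rw [← wl_inv hS]
  congr 2
  group

lemma wd_tri {S : Set G} (hS : Subgroup.closure S = ⊤) (x y z : G) :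
    wordDist S x z ≤ wordDist S x y + wordDist S y z := by
  unfold wordDist
  have := wl_mul hS (x⁻¹ * y) (y⁻¹ * z)
  have h : x⁻¹ * y * (y⁻¹ * z) = x⁻¹ * z := by group
  rw [h] at this
  exact_mod_cast this

lemma wd_self (S : Set G) (x : G) : wordDist S x x = 0 := by
  unfold wordDist
  simp [wl_one]

lemma wd_geod {S : Set G} (hS : Subgroup.closure S = ⊤) (x y : G) :
    ∃ (n : ℕ) (γ : ℕ → G), IsGeodesic (wordDist S) n γ ∧ γ 0 = x ∧ γ n = y := by
  obtain ⟨l, h1, h2, h3⟩ := wl_exists hS (x⁻¹ * y)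
  have key : ∀ i j : ℕ, i ≤ j → j ≤ l.length →
      wordDist S (x * (l.take i).prod) (x * (l.take j).prod) ≤ (j : ℝ) - i := by
    intro i j hij hj
    rw [wd_left]
    have e : (l.take i).prod⁻¹ * (l.take j).prod = ((l.take j).drop i).prod := by
      rw [inv_mul_eq_iff_eq_mul]
      have := List.prod_take_mul_prod_drop (l.take j) i
      rw [List.take_take, min_eq_left hij] at this
      exact this.symm
    unfold wordDist
    rw [e]
    have := wl_le (S := S) ((l.take j).drop i) (by
      intro z hz
      exact h2 z (List.mem_of_mem_take (List.mem_of_mem_drop hz)))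
    rw [List.length_drop, List.length_take, min_eq_left hj] at this
    have h' : ((wordLength S ((l.take j).drop i).prod : ℕ) : ℝ) ≤ ((j - i : ℕ) : ℝ) := by
      exact_mod_cast this
    rwa [Nat.cast_sub hij] at h'
  have h0 : x * (l.take 0).prod = x := by simp
  have hn : x * (l.take l.length).prod = y := by simp [h3]
  have hxy : wordDist S x y = l.length := by unfold wordDist; rw [h1]
  have key2 : ∀ i j : ℕ, i ≤ j → j ≤ l.length →
      wordDist S (x * (l.take i).prod) (x * (l.take j).prod) = (j : ℝ) - i := by
    intro i j hij hj
    apply le_antisymm (key i j hij hj)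
    have a1 := key 0 i (Nat.zero_le _) (hij.trans hj)
    have a2 := key j l.length hj le_rfl
    rw [h0] at a1
    rw [hn] at a2
    have t1 := wd_tri hS x (x * (l.take i).prod) y
    have t2 := wd_tri hS (x * (l.take i).prod) (x * (l.take j).prod) y
    push_cast at a1
    linarith
  refine ⟨l.length, fun i => x * (l.take i).prod, ?_, h0, hn⟩
  intro i j hi hj
  rcases le_total i j with h | h
  · have : (i : ℝ) ≤ j := by exact_mod_cast h
    rw [key2 i j h hj, abs_sub_comm, abs_of_nonneg (by linarith)]
  · have : (j : ℝ) ≤ i := by exact_mod_cast h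
    simp only []
    rw [wd_symm hS, key2 j i h hi, abs_of_nonneg (by linarith)]

lemma wd_pm {S : Set G} (hS : Subgroup.closure S = ⊤) : PM (wordDist S) :=
  ⟨wd_self S, wd_symm hS, wd_tri hS, fun _ _ => ⟨_, rfl⟩, wd_geod hS⟩

lemma ball_finite {S : Set G} (hfin : S.Finite) (hS : Subgroup.closure S = ⊤) (r : ℝ) :
    {g : G | (wordLength S g : ℝ) ≤ r}.Finite := by
  have hU : (S ∪ S⁻¹).Finite := hfin.union hfin.inv
  have : Finite ↥(S ∪ S⁻¹) := hU
  have hL := List.finite_length_le (↥(S ∪ S⁻¹)) ⌊r⌋₊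
  refine (hL.image (fun l => (l.map Subtype.val).prod)).subset ?_
  intro g hg
  obtain ⟨l, h1, h2, h3⟩ := wl_exists hS g
  refine ⟨l.attach.map (fun x => ⟨x.1, ?_⟩), ?_, ?_⟩
  · rcases h2 x.1 x.2 with h | h
    · exact Or.inl h
    · exact Or.inr h
  · simp only [Set.mem_ofPred_eq, List.length_map, List.length_attach]
    rw [h1]
    exact Nat.le_floor hg
  · simp [List.map_map, Function.comp_def, h3]

end Word

section Abstract

variable {α : Type*} {d : α → α → ℝ}

lemma PM.nonneg (hd : PM d) (x y : α) : 0 ≤ d x y := by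
  obtain ⟨n, hn⟩ := hd.nat x y
  rw [hn]; positivity

lemma exists_min {β : Type*} {P : β → Prop} (hP : ∃ b, P b) (N : β → ℝ)
    (hN : ∀ b, ∃ n : ℕ, N b = n) : ∃ b, P b ∧ ∀ b', P b' → N b ≤ N b' := by
  choose n hn using hN
  obtain ⟨b, hb⟩ := hP
  have hne : {k | ∃ b, P b ∧ n b = k}.Nonempty := ⟨n b, b, hb, rfl⟩
  obtain ⟨b0, h1, h2⟩ := Nat.sInf_mem hne
  refine ⟨b0, h1, fun b' hb' => ?_⟩
  rw [hn, hn, h2]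
  exact_mod_cast Nat.sInf_le (show n b' ∈ {k | ∃ b, P b ∧ n b = k} from ⟨b', hb', rfl⟩)

lemma qg_of_le (hd : PM d) {K ε : ℝ} {n : ℕ} {γ : ℕ → α}
    (h : ∀ i j : ℕ, i ≤ j → j ≤ n → (1 / K) * ((j : ℝ) - i) - ε ≤ d (γ i) (γ j) ∧
      d (γ i) (γ j) ≤ K * ((j : ℝ) - i) + ε) : IsQuasigeodesic d K ε n γ := by
  intro i j hi hj
  rcases le_total i j with hij | hij
  · have : (i : ℝ) ≤ j := by exact_mod_cast hij
    rw [abs_sub_comm, abs_of_nonneg (by linarith)]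
    exact h i j hij hj
  · have : (j : ℝ) ≤ i := by exact_mod_cast hij
    rw [abs_of_nonneg (by linarith), hd.symm]
    exact h j i hij hi

/-- Concatenation of two paths. -/
def cat (m : ℕ) (a b : ℕ → α) (i : ℕ) : α := if i ≤ m then a i else b (i - m)

lemma cat_left {m : ℕ} {a b : ℕ → α} {i : ℕ} (h : i ≤ m) : cat m a b i = a i := by
  simp [cat, h]

lemma cat_right {m : ℕ} {a b : ℕ → α} (hab : a m = b 0) (i : ℕ) :
    cat m a b (m + i) = b i := by
  unfold cat
  split_ifs with h
  · have : i = 0 := by omega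
    subst this; simpa using hab
  · congr 1; omega

lemma cat_qg (hd : PM d) {K ε L e : ℝ} (hK : 1 ≤ K) (hε : 0 ≤ ε) (hL : 1 ≤ L) (he : 0 ≤ e)
    {m n : ℕ} {a b : ℕ → α} (ha : IsQuasigeodesic d K ε m a) (hb : IsQuasigeodesic d K ε n b)
    (hab : a m = b 0)
    (hx : ∀ i ≤ m, ∀ j ≤ n, d (a i) (b 0) + d (b 0) (b j) ≤ L * d (a i) (b j) + e) :
    IsQuasigeodesic d (K * L) (2 * ε + e) (m + n) (cat m a b) := by
  have hk : (1 / (K * L)) ≤ 1 / K := by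
    apply one_div_le_one_div_of_le (by linarith)
    nlinarith
  have hKL : K ≤ K * L := by nlinarith
  have mono : ∀ t D : ℝ, 0 ≤ t → ((1 / K) * t - ε ≤ D ∧ D ≤ K * t + ε) →
      ((1 / (K * L)) * t - (2 * ε + e) ≤ D ∧ D ≤ K * L * t + (2 * ε + e)) := by
    intro t D ht h
    have h1 := mul_le_mul_of_nonneg_right hk ht
    have h2 := mul_le_mul_of_nonneg_right hKL ht
    constructor <;> linarith [h.1, h.2]
  apply qg_of_le hd
  intro i j hij hj
  have hij' : (i : ℝ) ≤ j := by exact_mod_cast hij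
  by_cases hjm : j ≤ m
  · rw [cat_left hjm, cat_left (hij.trans hjm)]
    apply mono _ _ (by linarith)
    have := ha i j (hij.trans hjm) hjm
    rwa [abs_sub_comm, abs_of_nonneg (by linarith)] at this
  · obtain ⟨j', rfl⟩ := Nat.exists_eq_add_of_le (le_of_not_ge hjm)
    rw [cat_right hab]
    by_cases him : i ≤ m
    · rw [cat_left him]
      have him' : (i : ℝ) ≤ m := by exact_mod_cast him
      have A := ha i m him le_rfl
      have B := hb 0 j' (Nat.zero_le _) (by omega)
      have C := hx i him j' (by omega)
      have T := hd.tri (a i) (b 0) (b j')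
      rw [abs_sub_comm, abs_of_nonneg (by linarith), hab] at A
      rw [abs_sub_comm, abs_of_nonneg (by simp)] at B
      push_cast at B ⊢
      have hK0 : 0 < K := by linarith
      have hL0 : 0 < L := by linarith
      have hj0 : (0 : ℝ) ≤ j' := by positivity
      constructor
      · have e1 : (1 / (K * L)) * ((m : ℝ) + j' - i)
            = (1 / L) * ((1 / K) * (m - i) + (1 / K) * j') := by
          field_simp
          ring
        have hl0 : 0 < 1 / L := by positivity
        have hl1 : 1 / L ≤ 1 := by rw [div_le_one hL0]; exact hL
        have e2 : (1 / L) * ((1 / K) * (m - i) + (1 / K) * j' - 2 * ε - e)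
            ≤ (1 / L) * (L * d (a i) (b j')) := by
          apply mul_le_mul_of_nonneg_left _ hl0.le
          linarith [A.1, B.1]
        have e3 : (1 / L) * (L * d (a i) (b j')) = d (a i) (b j') := by field_simp
        have e4 : (1 / L) * (2 * ε + e) ≤ 1 * (2 * ε + e) :=
          mul_le_mul_of_nonneg_right hl1 (by linarith)
        rw [e1]
        linarith
      · have h2 := mul_le_mul_of_nonneg_right hKL (show (0 : ℝ) ≤ m + j' - i by linarith)
        linarith [A.2, B.2]
    · obtain ⟨i', rfl⟩ := Nat.exists_eq_add_of_le (le_of_not_ge him)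
      rw [cat_right hab]
      apply mono _ _ (by linarith)
      have hij2 : (i' : ℝ) ≤ j' := by exact_mod_cast (by omega : i' ≤ j')
      have := hb i' j' (by omega) (by omega)
      rw [abs_sub_comm, abs_of_nonneg (by linarith)] at this
      push_cast
      rw [show (m : ℝ) + j' - (m + i') = j' - i' by ring]
      exact this

lemma geod_qg {K ε : ℝ} (hK : 1 ≤ K) (hε : 0 ≤ ε) {n : ℕ} {γ : ℕ → α}
    (h : IsGeodesic d n γ) : IsQuasigeodesic d K ε n γ := by
  intro i j hi hj
  rw [h i j hi hj]
  have h0 := abs_nonneg ((i : ℝ) - j)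
  have h1 : 1 / K ≤ 1 := by rw [div_le_one (by linarith)]; exact hK
  constructor <;> nlinarith

/-- Quasi-isometric embedding. -/
def QI {β : Type*} (dY : β → β → ℝ) (d : α → α → ℝ) (μ c : ℝ) (φ : β → α) : Prop :=
  ∀ x y, (1 / μ) * dY x y - c ≤ d (φ x) (φ y) ∧ d (φ x) (φ y) ≤ μ * dY x y + c

lemma QI.qg {β : Type*} {dY : β → β → ℝ} {μ c : ℝ} {φ : β → α} (h : QI dY d μ c φ)
    (hμ : 1 ≤ μ) {K ε : ℝ} (hK : 1 ≤ K) (hε : 0 ≤ ε) {n : ℕ} {γ : ℕ → β}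
    (hγ : IsQuasigeodesic dY K ε n γ) :
    IsQuasigeodesic d (μ * K) (μ * ε + c) n (fun i => φ (γ i)) := by
  intro i j hi hj
  have A := h (γ i) (γ j)
  have B := hγ i j hi hj
  have hμ0 : 0 < μ := by linarith
  constructor
  · have e1 : 1 / (μ * K) * |(i : ℝ) - j| = (1 / μ) * ((1 / K) * |(i : ℝ) - j|) := by
      field_simp
    have e2 := mul_le_mul_of_nonneg_left B.1 (show 0 ≤ 1 / μ by positivity)
    have e3 : 1 / μ ≤ μ := by rw [div_le_iff₀ hμ0]; nlinarith
    have e4 := mul_le_mul_of_nonneg_right e3 hε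
    rw [e1]
    linarith [A.1]
  · have e2 := mul_le_mul_of_nonneg_left B.2 hμ0.le
    linarith [A.2]

lemma QI.back {β : Type*} {dY : β → β → ℝ} {μ c : ℝ} {φ : β → α} (h : QI dY d μ c φ)
    (hμ : 1 ≤ μ) {x y : β} {r : ℝ} (hr : d (φ x) (φ y) ≤ r) : dY x y ≤ μ * (r + c) := by
  have A := (h x y).1
  have hμ0 : 0 < μ := by linarith
  have : (1 / μ) * dY x y ≤ r + c := by linarith
  have e := mul_le_mul_of_nonneg_left this hμ0.le
  have e3 : μ * ((1 / μ) * dY x y) = dY x y := by field_simp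
  linarith

/-- Uniform quasiconvexity of a subset with respect to all quasigeodesics. -/
def QCset (d : α → α → ℝ) (F : ℝ → ℝ → ℝ → ℝ) (A : Set α) : Prop :=
  ∀ K ε r : ℝ, 1 ≤ K → 0 ≤ ε → 0 ≤ r → ∀ (m : ℕ) (η : ℕ → α), IsQuasigeodesic d K ε m η →
    (∃ a ∈ A, d (η 0) a ≤ r) → (∃ a ∈ A, d (η m) a ≤ r) → ∀ j ≤ m, ∃ a ∈ A, d (η j) a ≤ F K ε r

lemma qc_of_stable (hd : PM d) {β : Type*} {dY : β → β → ℝ} (hY : PM dY) {φ : β → α}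
    {f : ℝ → ℝ → ℝ}
    (hst : ∀ n γ, IsGeodesic dY n γ → IsStablePath d f n (fun i => φ (γ i)))
    {F : ℝ → ℝ → ℝ → ℝ} (hF : ∀ K ε r, 0 ≤ r → |f K (ε + 2 * r)| + r ≤ F K ε r) :
    QCset d F (Set.range φ) := by
  rintro K ε r hK hε hr m η hη ⟨_, ⟨y0, rfl⟩, h0⟩ ⟨_, ⟨y1, rfl⟩, h1⟩ j hj
  obtain ⟨n, γ, hγ, hγ0, hγn⟩ := hY.geod y0 y1
  let η' : ℕ → α := fun i => if i = 0 then φ y0 else if i = m then φ y1 else η i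
  have hclose : ∀ i, d (η i) (η' i) ≤ r := by
    intro i
    simp only [η']
    split_ifs with a b
    · rw [a]; exact h0
    · rw [b]; exact h1
    · rw [hd.self]; exact hr
  have hq : IsQuasigeodesic d K (ε + 2 * r) m η' := by
    intro i j hi hj
    have A := hη i j hi hj
    have t1 := hd.tri (η' i) (η i) (η' j)
    have t2 := hd.tri (η i) (η j) (η' j)
    have t3 := hd.tri (η i) (η' i) (η j)
    have t4 := hd.tri (η' i) (η' j) (η j)
    have c1 := hclose i
    have c2 := hclose j
    rw [hd.symm (η' i) (η i)] at t1
    rw [hd.symm (η' j) (η j)] at t4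
    constructor <;> linarith [A.1, A.2]
  have hend : ∃ i ≤ n, η' m = φ (γ i) := by
    by_cases hm : m = 0
    · exact ⟨0, Nat.zero_le _, by simp [η', hm, hγ0]⟩
    · exact ⟨n, le_rfl, by simp [η', hm, hγn]⟩
  obtain ⟨i, hi, hdi⟩ := hst n γ hγ K (ε + 2 * r) hK (by linarith) m η' hq
    ⟨0, Nat.zero_le _, by simp [η', hγ0]⟩ hend j hj
  refine ⟨φ (γ i), ⟨_, rfl⟩, ?_⟩
  have t := hd.tri (η j) (η' j) (φ (γ i))
  have := hF K ε r hr
  have := le_abs_self (f K (ε + 2 * r))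
  have := hclose j
  linarith

/-- Coarse centre of three sets. -/
lemma triple (hd : PM d) {β : Type*} {dY : β → β → ℝ} (hY : PM dY) {φ : β → α} {μ c : ℝ}
    (hμ : 1 ≤ μ) (hc : 0 ≤ c) (hφ : QI dY d μ c φ) {F : ℝ → ℝ → ℝ → ℝ} {D : ℝ} (hD : 0 ≤ D)
    {A B : Set α} (hA : QCset d F A) (hB : QCset d F B)
    (hAB : ∃ a ∈ A, ∃ b ∈ B, d a b ≤ D) (hYA : ∃ y, ∃ a ∈ A, d (φ y) a ≤ D)
    (hYB : ∃ y, ∃ a ∈ B, d (φ y) a ≤ D) :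
    ∃ p, (∃ a ∈ A, d (φ p) a ≤ F (μ * 3) (2 * c) D) ∧
      (∃ b ∈ B, d (φ p) b ≤ F (μ * 3) (2 * c) D) := by
  obtain ⟨z, hzA, b, hbB, hzb⟩ := hAB
  obtain ⟨p, -, hp⟩ := exists_min (P := fun _ : β => True) ⟨hYA.choose, trivial⟩
    (fun y => d z (φ y)) (fun y => hd.nat _ _)
  have main : ∀ C : Set α, QCset d F C → (∃ a ∈ C, d z a ≤ D) → (∃ y, ∃ a ∈ C, d (φ y) a ≤ D) →
      ∃ a ∈ C, d (φ p) a ≤ F (μ * 3) (2 * c) D := by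
    rintro C hC hz ⟨y, hy⟩
    obtain ⟨m, a, ha, ha0, ham⟩ := hd.geod z (φ p)
    obtain ⟨n, γ, hγ, hγ0, hγn⟩ := hY.geod p y
    have q1 : IsQuasigeodesic d μ c m a := geod_qg hμ hc ha
    have q2 : IsQuasigeodesic d μ c n (fun i => φ (γ i)) := by
      have := hφ.qg hμ le_rfl le_rfl (geod_qg le_rfl le_rfl hγ)
      simpa using this
    have hab : a m = (fun i => φ (γ i)) 0 := by simp [ham, hγ0]
    have q := cat_qg hd hμ hc (L := 3) (e := 0) (by norm_num) le_rfl q1 q2 hab (by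
      intro i hi j hj
      simp only [hγ0]
      have t1 := hp (γ j) trivial
      have t2 := hd.tri z (a i) (φ (γ j))
      have g1 := ha 0 i (Nat.zero_le _) hi
      have g2 := ha i m hi le_rfl
      have g3 := ha 0 m (Nat.zero_le _) le_rfl
      have hi' : (i : ℝ) ≤ m := by exact_mod_cast hi
      rw [ha0, abs_sub_comm, abs_of_nonneg (by simp)] at g1
      rw [ham, abs_sub_comm, abs_of_nonneg (by linarith)] at g2
      rw [ha0, ham, abs_sub_comm, abs_of_nonneg (by simp)] at g3
      have t3 := hd.tri (φ p) (a i) (φ (γ j))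
      rw [hd.symm (φ p) (a i)] at t3
      push_cast at *
      linarith)
    have := hC _ _ D (by linarith) (by linarith) hD _ _ q (by
      rw [cat_left (Nat.zero_le _), ha0]; exact hz) (by
      rw [cat_right hab]; simp only [hγn]; exact hy) m (by omega)
    rw [cat_left le_rfl, ham] at this
    simpa using this
  exact ⟨p, main A hA ⟨z, hzA, by rw [hd.self]; exact hD⟩ hYA, main B hB ⟨b, hbB, hzb⟩ hYB⟩

end Abstract


section Helly

variable {α β : Type*} {d : α → α → ℝ} {dY : β → β → ℝ}

/-- The concatenation of geodesics through a nearest point `p` of a coarsely quasiconvex subset. -/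
lemma near_geod (hY : PM dY) {φ : β → α} {μ c : ℝ}
    (hμ : 1 ≤ μ) (hφ : QI dY d μ c φ) {f : ℝ → ℝ → ℝ}
    (hst : ∀ n γ, IsGeodesic dY n γ → IsStablePath d f n (fun i => φ (γ i)))
    {P : β → Prop} {w p z : β} {r' : ℝ} (hr' : 0 ≤ r') (hc : 0 ≤ c)
    (hp : ∀ y, P y → dY w p ≤ dY w y)
    (hq : ∀ (n : ℕ) (γ : ℕ → β), IsGeodesic dY n γ → γ 0 = p → γ n = z → ∀ j ≤ n,
      ∃ y, P y ∧ dY (γ j) y ≤ r')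
    {n : ℕ} {γ : ℕ → β} (hγ : IsGeodesic dY n γ) (h0 : γ 0 = w) (hn : γ n = z) :
    ∃ s ≤ n, d (φ p) (φ (γ s)) ≤ f (μ * 3) (μ * (2 * r') + c) := by
  obtain ⟨k, a, ha, ha0, hak⟩ := hY.geod w p
  obtain ⟨m, b, hb, hb0, hbm⟩ := hY.geod p z
  have hab : a k = b 0 := by rw [hak, hb0]
  have q := cat_qg hY (K := 1) (ε := 0) le_rfl le_rfl (L := 3) (e := 2 * r') (by norm_num)
    (by linarith) (geod_qg le_rfl le_rfl ha) (geod_qg le_rfl le_rfl hb) hab (by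
      intro i hi j hj
      rw [hb0]
      obtain ⟨y, hy, hjy⟩ := hq m b hb hb0 hbm j hj
      have t1 := hp y hy
      have t2 := hY.tri w (a i) y
      have t4 := hY.tri (a i) (b j) y
      have g1 := ha 0 i (Nat.zero_le _) hi
      have g2 := ha i k hi le_rfl
      have g3 := ha 0 k (Nat.zero_le _) le_rfl
      have hi' : (i : ℝ) ≤ k := by exact_mod_cast hi
      rw [ha0, abs_sub_comm, abs_of_nonneg (by simp)] at g1
      rw [hak, abs_sub_comm, abs_of_nonneg (by linarith)] at g2
      rw [ha0, hak, abs_sub_comm, abs_of_nonneg (by simp)] at g3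
      have t3 := hY.tri p (a i) (b j)
      rw [hY.symm p (a i)] at t3
      push_cast at *
      linarith)
  have q' := hφ.qg hμ (by norm_num) (by linarith) q
  rw [show (1 : ℝ) * 3 = 3 by norm_num, show 2 * 0 + 2 * r' = 2 * r' by ring] at q'
  have hpos : 0 ≤ μ * (2 * r') + c := by
    have : 0 ≤ μ * (2 * r') := mul_nonneg (by linarith) (by linarith)
    linarith
  obtain ⟨s, hs, hd⟩ := hst n γ hγ _ _ (by linarith) hpos _ _ q'
    ⟨0, Nat.zero_le _, by simp only [cat_left (Nat.zero_le _), ha0, h0]⟩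
    ⟨n, le_rfl, by simp only [cat_right hab, hbm, hn]⟩ k (by omega)
  refine ⟨s, hs, ?_⟩
  simp only [cat_left le_rfl, hak] at hd
  exact hd

theorem helly (hd : PM d) (hY : PM dY) {μ c : ℝ} (hμ : 1 ≤ μ) (hc : 0 ≤ c) (f : ℝ → ℝ → ℝ)
    (F : ℝ → ℝ → ℝ → ℝ) (hF : ∀ K ε r, 0 ≤ r → 0 ≤ F K ε r) (Mf : ℝ → ℝ → ℝ) {D : ℝ}
    (hD : 0 ≤ D) : ∃ R : ℝ, 0 ≤ R ∧ ∀ φ : β → α, QI dY d μ c φ →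
      (∀ n γ, IsGeodesic dY n γ → IsStablePath d f n (fun i => φ (γ i))) →
      ∀ 𝒞 : Set (Set α), 𝒞.Finite → 𝒞.Nonempty → (∀ A ∈ 𝒞, QCset d F A) →
      (∀ A ∈ 𝒞, ∀ r r1 y, (∃ a ∈ A, d (φ y) a ≤ r1) → (∃ y', ∃ a ∈ A, d (φ y') a ≤ r) →
        ∃ y', (∃ a ∈ A, d (φ y') a ≤ r) ∧ d (φ y) (φ y') ≤ Mf r r1) →
      (∀ A ∈ 𝒞, ∀ B ∈ 𝒞, ∃ a ∈ A, ∃ b ∈ B, d a b ≤ D) →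
      (∀ A ∈ 𝒞, ∃ y, ∃ a ∈ A, d (φ y) a ≤ D) →
      ∃ x, ∀ A ∈ 𝒞, ∃ a ∈ A, d x a ≤ R := by
  obtain ⟨r, hr⟩ : ∃ r, r = F (μ * 3) (2 * c) D := ⟨_, rfl⟩
  have hr0 : 0 ≤ r := hr ▸ hF _ _ _ hD
  obtain ⟨r1, hr1⟩ : ∃ r1, r1 = F μ c r := ⟨_, rfl⟩
  obtain ⟨r', hr'⟩ : ∃ r', r' = μ * (|Mf r r1| + c) := ⟨_, rfl⟩
  have hr'0 : 0 ≤ r' := by rw [hr']; positivity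
  obtain ⟨E, hE⟩ : ∃ E, E = |f (μ * 3) (μ * (2 * r') + c)| := ⟨_, rfl⟩
  have hE0 : 0 ≤ E := hE ▸ abs_nonneg _
  obtain ⟨ρ, hρ⟩ : ∃ ρ, ρ = μ * (E + c) := ⟨_, rfl⟩
  have hρ0 : 0 ≤ ρ := by rw [hρ]; positivity
  have hF1 : 0 ≤ F μ c (E + r) := hF _ _ _ (by positivity)
  refine ⟨E + F μ c (E + r) + (μ * (4 * ρ) + c + r), by positivity, ?_⟩
  intro φ hφ hst 𝒞 hfin hne hQC hM hpair hclose
  let N : Set α → β → Prop := fun A y => ∃ a ∈ A, d (φ y) a ≤ r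
  have htr : ∀ A ∈ 𝒞, ∀ B ∈ 𝒞, ∃ z, N A z ∧ N B z := by
    intro A hA B hB
    obtain ⟨p, h1, h2⟩ := triple hd hY hμ hc hφ hD (hQC A hA) (hQC B hB) (hpair A hA B hB)
      (hclose A hA) (hclose B hB)
    rw [← hr] at h1 h2
    exact ⟨p, h1, h2⟩
  have hgq : ∀ (n : ℕ) (γ : ℕ → β), IsGeodesic dY n γ →
      IsQuasigeodesic d μ c n (fun i => φ (γ i)) := by
    intro n γ hγ
    have := hφ.qg hμ le_rfl le_rfl (geod_qg le_rfl le_rfl hγ)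
    simpa using this
  have hqc : ∀ A ∈ 𝒞, ∀ (n : ℕ) (γ : ℕ → β), IsGeodesic dY n γ → N A (γ 0) → N A (γ n) →
      ∀ j ≤ n, ∃ y, N A y ∧ dY (γ j) y ≤ r' := by
    intro A hA n γ hγ h0 hn j hj
    have h1 := hQC A hA μ c r hμ hc hr0 n _ (hgq n γ hγ) h0 hn j hj
    rw [← hr1] at h1
    obtain ⟨y, hy, hdy⟩ := hM A hA r r1 (γ j) h1 ⟨_, h0⟩
    refine ⟨y, hy, ?_⟩
    rw [hr']
    exact hφ.back hμ (hdy.trans (le_abs_self _))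
  obtain ⟨A0, hA0⟩ := hne
  obtain ⟨w, -⟩ := hclose A0 hA0
  have hex : ∀ A : Set α, ∃ p, A ∈ 𝒞 → N A p ∧ ∀ y, N A y → dY w p ≤ dY w y := by
    intro A
    by_cases hA : A ∈ 𝒞
    · obtain ⟨z, hz, -⟩ := htr A hA A hA
      obtain ⟨p, hp⟩ := exists_min ⟨z, hz⟩ (fun y => dY w y) (fun y => hY.nat _ _)
      exact ⟨p, fun _ => hp⟩
    · exact ⟨w, fun h => absurd h hA⟩
  choose p hp using hex
  obtain ⟨B, hB, hmax⟩ := Set.exists_max_image 𝒞 (fun A => dY w (p A)) hfin ⟨A0, hA0⟩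
  refine ⟨φ (p B), fun C hC => ?_⟩
  obtain ⟨z, hzB, hzC⟩ := htr B hB C hC
  obtain ⟨n, γ, hγ, h0, hn⟩ := hY.geod w z
  have hnear : ∀ A ∈ 𝒞, N A z → ∃ s ≤ n, d (φ (p A)) (φ (γ s)) ≤ E ∧ dY (p A) (γ s) ≤ ρ := by
    intro A hA hz
    obtain ⟨s, hs, hds⟩ := near_geod hY hμ hφ hst (P := N A) hr'0 hc (hp A hA).2 (by
      intro n γ hγ h0 hn
      exact hqc A hA n γ hγ (h0 ▸ (hp A hA).1) (hn ▸ hz)) hγ h0 hn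
    have h1 : d (φ (p A)) (φ (γ s)) ≤ E := hE ▸ hds.trans (le_abs_self _)
    exact ⟨s, hs, h1, hρ ▸ hφ.back hμ h1⟩
  obtain ⟨s, hs, hs1, hs2⟩ := hnear B hB hzB
  obtain ⟨t, ht, ht1, ht2⟩ := hnear C hC hzC
  obtain ⟨a, haC, ha⟩ := (hp C hC).1
  rcases le_total t s with hts | hst'
  · obtain ⟨k, rfl⟩ := Nat.exists_eq_add_of_le hts
    have hγ' : IsGeodesic dY (n - t) (fun i => γ (t + i)) := by
      intro i j hi hj
      have := hγ (t + i) (t + j) (by omega) (by omega)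
      rw [this]
      push_cast
      congr 1
      ring
    obtain ⟨b, hbC, hb⟩ := hQC C hC μ c (E + r) hμ hc (by positivity) _ _ (hgq _ _ hγ')
      ⟨a, haC, by
        have := hd.tri (φ (γ t)) (φ (p C)) a
        rw [hd.symm (φ (γ t)) (φ (p C))] at this
        simp only [Nat.add_zero]
        linarith⟩
      (by
        obtain ⟨b, hb, hb'⟩ := hzC
        refine ⟨b, hb, ?_⟩
        simp only [Nat.add_sub_cancel' ht, hn]
        linarith) k (by omega)
    refine ⟨b, hbC, ?_⟩
    have := hd.tri (φ (p B)) (φ (γ (t + k))) b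
    have : 0 ≤ μ * (4 * ρ) := by positivity
    linarith
  · have hm := hmax C hC
    have g1 := hγ 0 s (Nat.zero_le _) hs
    have g2 := hγ 0 t (Nat.zero_le _) ht
    have g3 := hγ s t hs ht
    have hst2 : (s : ℝ) ≤ t := by exact_mod_cast hst'
    rw [h0, abs_sub_comm, abs_of_nonneg (by simp)] at g1 g2
    rw [abs_sub_comm, abs_of_nonneg (by linarith)] at g3
    push_cast at g1 g2
    have t1 := hY.tri w (p C) (γ t)
    have t2 := hY.tri w (γ s) (p B)
    rw [hY.symm (γ s)] at t2
    have t3 := hY.tri (p B) (γ s) (p C)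
    have t4 := hY.tri (γ s) (γ t) (p C)
    rw [hY.symm (γ t) (p C)] at t4
    have h4 : dY (p B) (p C) ≤ 4 * ρ := by linarith
    have h5 := (hφ (p B) (p C)).2
    have h6 : μ * dY (p B) (p C) ≤ μ * (4 * ρ) := mul_le_mul_of_nonneg_left h4 (by linarith)
    have h7 := hd.tri (φ (p B)) (φ (p C)) a
    exact ⟨a, haC, by linarith⟩

end Helly

section Final

variable {G : Type*} [Group G]

/-- Cocompactness: coarse intersections at different scales are uniformly comparable. -/
lemma coarse_inter {S : Set G} (hfin : S.Finite) (hS : Subgroup.closure S = ⊤)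
    (H K : Subgroup G) (r r1 : ℝ) : ∃ M : ℝ, ∀ g k : G, ∀ y : H,
      (∃ a ∈ k • (K : Set G), wordDist S (g * y) a ≤ r1) →
      (∃ y' : H, ∃ a ∈ k • (K : Set G), wordDist S (g * y') a ≤ r) →
      ∃ y' : H, (∃ a ∈ k • (K : Set G), wordDist S (g * y') a ≤ r) ∧
        wordDist S (g * y) (g * y') ≤ M := by
  have hw : ∀ u : G, ∃ v : H, (∃ v' : H, ∃ a ∈ u • (K : Set G), wordDist S v' a ≤ r) →
      ∃ a ∈ u • (K : Set G), wordDist S v a ≤ r := by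
    intro u
    by_cases h : ∃ v' : H, ∃ a ∈ u • (K : Set G), wordDist S v' a ≤ r
    · exact ⟨h.choose, fun _ => h.choose_spec⟩
    · exact ⟨1, fun h' => absurd h' h⟩
  choose v hv using hw
  obtain ⟨M, hM⟩ := ((ball_finite hfin hS r1).image
    (fun u => wordDist S (1 : G) (v u))).bddAbove
  refine ⟨M, ?_⟩
  rintro g k y ⟨a, ha, hya⟩ ⟨y', b, hb, hyb⟩
  obtain ⟨h1, hh1, rfl⟩ := Set.mem_smul_set.1 ha
  obtain ⟨h2, hh2, rfl⟩ := Set.mem_smul_set.1 hb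
  simp only [smul_eq_mul] at *
  let u : G := (g * y)⁻¹ * (k * h1)
  have hu : (wordLength S u : ℝ) ≤ r1 := hya
  have hvu := hv u ⟨y⁻¹ * y', u * (h1⁻¹ * h2), Set.mem_smul_set.2 ⟨h1⁻¹ * h2,
    K.mul_mem (K.inv_mem hh1) hh2, rfl⟩, by
      rw [← wd_left S (g * y)]
      convert hyb using 2
      · push_cast; group
      · simp only [u]; group⟩
  obtain ⟨b', hb', hd⟩ := hvu
  obtain ⟨h3, hh3, rfl⟩ := Set.mem_smul_set.1 hb'
  refine ⟨y * v u, ⟨k * (h1 * h3), Set.mem_smul_set.2 ⟨h1 * h3, K.mul_mem hh1 hh3, rfl⟩, ?_⟩, ?_⟩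
  · rw [← wd_left S (g * y)] at hd
    convert hd using 2
    · push_cast; group
    · simp only [u, smul_eq_mul]; group
  · have := hM ⟨u, hu, rfl⟩
    simp only at this
    rw [← wd_left S (g * y)] at this
    rw [mul_one] at this
    rw [Subgroup.coe_mul, ← mul_assoc]
    exact this

lemma stable_translate {S : Set G} {f f' : ℝ → ℝ → ℝ} (hff : ∀ K ε, f K ε ≤ f' K ε) {n : ℕ}
    {γ : ℕ → G} (h : IsStablePath (wordDist S) f n γ) (g : G) :
    IsStablePath (wordDist S) f' n (fun i => g * γ i) := by
  rintro K ε hK hε m η hη ⟨i0, hi0, h0⟩ ⟨i1, hi1, h1⟩ j hj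
  obtain ⟨i, hi, hd⟩ := h K ε hK hε m (fun i => g⁻¹ * η i) (by
      intro i j hi hj
      rw [wd_left]
      exact hη i j hi hj) ⟨i0, hi0, by simp [h0]⟩ ⟨i1, hi1, by simp [h1]⟩ j hj
  refine ⟨i, hi, ?_⟩
  rw [← wd_left S g, mul_inv_cancel_left] at hd
  exact hd.trans (hff K ε)

theorem finite_case {S : Set G} (hSfin : S.Finite)
    (hSgen : Subgroup.closure S = ⊤) (l : ℕ) (H : Fin l → Subgroup G)
    (hstable : ∀ i, IsStableSubgroup S (H i)) (D : ℝ) (hD : 0 ≤ D) : ∃ R : ℝ, 0 ≤ R ∧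
      ∀ 𝒞 : Set (Set G), 𝒞.Finite → (∀ A ∈ 𝒞, ∃ (i : Fin l) (g : G), A = g • (H i : Set G)) →
        (∀ A ∈ 𝒞, ∀ B ∈ 𝒞, ∃ a ∈ A, ∃ b ∈ B, wordDist S a b ≤ D) →
        ∃ x : G, ∀ A ∈ 𝒞, ∃ a ∈ A, wordDist S x a ≤ R := by
  have hd := wd_pm hSgen
  choose f T _ hTgen hqi hst using hstable
  choose μ c hμ hc hqi using hqi
  choose M hM using fun i j => fun r r1 => coarse_inter hSfin hSgen (H i) (H j) r r1
  let F : ℝ → ℝ → ℝ → ℝ := fun K ε r => (∑ i, |f i K (ε + 2 * r)|) + r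
  have hF0 : ∀ K ε r, 0 ≤ r → 0 ≤ F K ε r := fun K ε r hr =>
    add_nonneg (Finset.sum_nonneg fun i _ => abs_nonneg _) hr
  have hrange : ∀ (i : Fin l) (g : G), Set.range (fun y : H i => g * (y : G))
      = g • (H i : Set G) := by
    intro i g
    ext x
    simp [Set.mem_smul_set]
  have hstab : ∀ (i : Fin l) (g : G) n (γ : ℕ → H i), IsGeodesic (wordDist (T i)) n γ →
      IsStablePath (wordDist S) (f i) n (fun k => g * (γ k : G)) := by
    intro i g n γ hγ
    exact stable_translate (fun _ _ => le_rfl) (hst i n γ hγ).2 g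
  have hQC : ∀ (i : Fin l) (g : G), QCset (wordDist S) F (g • (H i : Set G)) := by
    intro i g
    rw [← hrange]
    refine qc_of_stable hd (wd_pm (hTgen i)) (hstab i g) ?_
    intro K ε r hr
    have := Finset.single_le_sum (f := fun i => |f i K (ε + 2 * r)|)
      (fun i _ => abs_nonneg _) (Finset.mem_univ i)
    simp only [F]
    linarith
  choose R hR0 hR using fun i => helly hd (wd_pm (hTgen i)) (hμ i) (hc i) (f i) F hF0
    (fun r r1 => ∑ j, |M i j r r1|) hD
  refine ⟨∑ i, R i, Finset.sum_nonneg fun i _ => hR0 i, ?_⟩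
  intro 𝒞 hfin hcos hpair
  rcases 𝒞.eq_empty_or_nonempty with rfl | hne
  · exact ⟨1, by simp⟩
  obtain ⟨A0, hA0⟩ := id hne
  obtain ⟨i, g, hi⟩ := hcos A0 hA0
  obtain ⟨x, hx⟩ := hR i (fun y => g * (y : G)) (by
      intro y y'
      rw [wd_left]
      exact hqi i y y') (hstab i g) 𝒞 hfin hne (by
      intro A hA
      obtain ⟨j, k, rfl⟩ := hcos A hA
      exact hQC j k) (by
      intro A hA r r1 y h1 h2
      obtain ⟨j, k, rfl⟩ := hcos A hA
      obtain ⟨y', h3, h4⟩ := hM i j r r1 g k y h1 h2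
      refine ⟨y', h3, h4.trans ((le_abs_self _).trans ?_)⟩
      exact Finset.single_le_sum (f := fun j => |M i j r r1|)
        (fun i _ => abs_nonneg _) (Finset.mem_univ j)) hpair (by
      intro A hA
      obtain ⟨b, hb, a, ha, hab⟩ := hpair A0 hA0 A hA
      rw [hi, ← hrange] at hb
      obtain ⟨y, rfl⟩ := hb
      exact ⟨y, a, ha, hab⟩)
  refine ⟨x, fun A hA => ?_⟩
  obtain ⟨a, ha, hxa⟩ := hx A hA
  exact ⟨a, ha, hxa.trans (Finset.single_le_sum (fun i _ => hR0 i) (Finset.mem_univ i))⟩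

end Final

end CoarseCenters

/-- **Coarse centers.** For each `D ≥ 0` there is `R ≥ 0` such that any collection of
pairwise `D`-close cosets of subgroups in the family admits a point whose `R`-ball
meets every coset of the collection. -/
theorem coarse_centers_of_stable {G : Type*} [Group G] (S : Set G) (hSfin : S.Finite)
    (hSgen : Subgroup.closure S = ⊤) (l : ℕ) (H : Fin l → Subgroup G)
    (hstable : ∀ i, IsStableSubgroup S (H i)) :
    ∀ D : ℝ, 0 ≤ D → ∃ R : ℝ, 0 ≤ R ∧
      ∀ 𝒞 : Set (Set G), (∀ A ∈ 𝒞, ∃ (i : Fin l) (g : G), A = g • (H i : Set G)) →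
        (∀ A ∈ 𝒞, ∀ B ∈ 𝒞, setDist S A B ≤ D) →
        ∃ x : G, ∀ A ∈ 𝒞, ∃ a ∈ A, wordDist S x a ≤ R := by
  intro D hD
  obtain ⟨R, hR0, hR⟩ := CoarseCenters.finite_case hSfin hSgen l H hstable (D + 1) (by linarith)
  refine ⟨R, hR0, fun 𝒞 hcos hdist => ?_⟩
  have hpair : ∀ A ∈ 𝒞, ∀ B ∈ 𝒞, ∃ a ∈ A, ∃ b ∈ B, wordDist S a b ≤ D + 1 := by
    intro A hA B hB
    have h := hdist A hA B hB
    have hne : {r : ℝ | ∃ a ∈ A, ∃ b ∈ B, r = wordDist S a b}.Nonempty := by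
      obtain ⟨i, g, rfl⟩ := hcos A hA
      obtain ⟨j, k, rfl⟩ := hcos B hB
      exact ⟨_, g • 1, Set.smul_mem_smul_set (H i).one_mem, k • 1,
        Set.smul_mem_smul_set (H j).one_mem, rfl⟩
    obtain ⟨r, ⟨a, ha, b, hb, rfl⟩, hlt⟩ :=
      exists_lt_of_csInf_lt hne (lt_of_le_of_lt h (lt_add_one D))
    exact ⟨a, ha, b, hb, hlt.le⟩
  have hball := CoarseCenters.ball_finite hSfin hSgen R
  have hfin : 𝒞.Finite := by
    by_contra hinf
    have hprod : (Set.univ ×ˢ {g : G | (wordLength S g : ℝ) ≤ R} : Set (Fin l × G)).Finite :=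
      Set.finite_univ.prod hball
    obtain ⟨t, ht, hcard⟩ := Set.Infinite.exists_subset_card_eq hinf (hprod.toFinset.card + 1)
    obtain ⟨x, hx⟩ := hR (t : Set (Set G)) t.finite_toSet (fun A hA => hcos A (ht hA))
      (fun A hA B hB => hpair A (ht hA) B (ht hB))
    classical
    have hsub : t ⊆ hprod.toFinset.image
        (fun q : Fin l × G => (x * q.2) • (H q.1 : Set G)) := by
      intro A hA
      obtain ⟨a, ha, hxa⟩ := hx A hA
      obtain ⟨i, g, rfl⟩ := hcos A (ht hA)
      rw [Finset.mem_image]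
      refine ⟨(i, x⁻¹ * a), ?_, ?_⟩
      · rw [Set.Finite.mem_toFinset]
        exact ⟨trivial, hxa⟩
      · simp only [mul_inv_cancel_left]
        rw [leftCoset_eq_iff]
        obtain ⟨h, hh, rfl⟩ := Set.mem_smul_set.1 ha
        have : (g • h)⁻¹ * g = h⁻¹ := by simp [smul_eq_mul]
        rw [this]
        exact (H i).inv_mem hh
    have h1 := Finset.card_le_card hsub
    have h2 := h1.trans Finset.card_image_le
    omega
  exact hR 𝒞 hfin hcos hpair
end
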